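/- arXiv:2310.01394 — 2 statements merged into one kernel-verified Lean document; each statement's English description precedes it below -/
import Mathlib

section
/- For all integers n ≥ 1 and r ≥ 2, t^(r)(n) ≥ min{t0, t1, t2}, where t0 = 2·t^(r)(⌊n/3⌋), t1 = τ(⌊ℓ_{r-1}(n/(6r))⌋), and t2 = min over 2 ≤ p ≤ r−2 of max{ t^{(r−p)}(⌊ℓ_p(n/(6r))⌋), t^{(p)}(⌊ℓ_{r−p}(n/(6r))⌋) }; for r ≤ 3 the range 2 ≤ p ≤ r−2 is empty and t2 is taken to be n (so it does not affect the minimum). -/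
/-- A (sub-)matching: a finite set of pairwise disjoint `r`-element subsets
("edges") of the linearly ordered vertex set `ℕ`. -/
def IsMatching (r : ℕ) (M : Finset (Finset ℕ)) : Prop :=
  (∀ e ∈ M, e.card = r) ∧ ∀ e ∈ M, ∀ f ∈ M, e ≠ f → Disjoint e f

/-- The vertex support of a matching: the union of its edges. -/
def mSupport (M : Finset (Finset ℕ)) : Finset ℕ := M.sup id

/-- An ordered `r`-matching of size `n`: `n` pairwise disjoint `r`-element edges
partitioning `[rn] = {1, …, rn}`. -/
def IsOrderedMatching (r n : ℕ) (M : Finset (Finset ℕ)) : Prop :=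
  IsMatching r M ∧ M.card = n ∧ mSupport M = Finset.Icc 1 (r * n)

/-- Two ordered matchings are isomorphic if some (equivalently, the unique)
order-preserving bijection between their vertex supports maps edges onto edges. -/
def MatchIso (M N : Finset (Finset ℕ)) : Prop :=
  ∃ f : ℕ → ℕ, Set.BijOn f (mSupport M : Set ℕ) (mSupport N : Set ℕ) ∧
    (∀ x ∈ mSupport M, ∀ y ∈ mSupport M, x < y → f x < f y) ∧
    N = M.image fun e => e.image f

/-- `M` contains twins of size `k`: a pair of vertex-disjoint isomorphic
sub-matchings of `M`, each with `k` edges. -/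
def HasTwins (M : Finset (Finset ℕ)) (k : ℕ) : Prop :=
  ∃ M₁ M₂ : Finset (Finset ℕ), M₁ ⊆ M ∧ M₂ ⊆ M ∧
    Disjoint (mSupport M₁) (mSupport M₂) ∧ MatchIso M₁ M₂ ∧
    M₁.card = k ∧ M₂.card = k

/-- `t(M)`: the maximum size of twins in `M`. -/
noncomputable def twinMax (M : Finset (Finset ℕ)) : ℕ := sSup {k | HasTwins M k}

/-- `t^(r)(n)`: the minimum of `t(M)` over all ordered `r`-matchings of size `n`. -/
noncomputable def minTwins (r n : ℕ) : ℕ :=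
  sInf {t | ∃ M, IsOrderedMatching r n M ∧ twinMax M = t}

/-- A permutation `π` of `[n]` has twins of length `k`: two order-isomorphic
subsequences occupying disjoint sets of positions. -/
def PermTwins {n : ℕ} (π : Equiv.Perm (Fin n)) (k : ℕ) : Prop :=
  ∃ a b : Fin k → Fin n, StrictMono a ∧ StrictMono b ∧
    (∀ i j, a i ≠ b j) ∧ ∀ i j, (π (a i) < π (a j) ↔ π (b i) < π (b j))

/-- `τ(n)`: the largest `k` such that every permutation of `[n]` has twins of length `k`. -/
noncomputable def permTau (n : ℕ) : ℕ :=
  sSup {k | ∀ π : Equiv.Perm (Fin n), PermTwins π k}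

/-- An `r`-pattern, represented by its canonical representative: an ordered
`r`-matching of size `2` (on the vertex set `[2r]`). Every isomorphism class of
ordered `r`-matchings of size `2` contains exactly one such representative. -/
def IsPattern (r : ℕ) (P : Finset (Finset ℕ)) : Prop := IsOrderedMatching r 2 P

/-- A `P`-clique: a matching all of whose pairs of (distinct) edges form the pattern `P`. -/
def IsPClique (P M : Finset (Finset ℕ)) : Prop :=
  ∀ e ∈ M, ∀ f ∈ M, e ≠ f → MatchIso {e, f} P

/-- `L(M)`: the size of the largest sub-matching of `M` that is a `P`-clique,
over all `r`-patterns `P`. -/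
noncomputable def cliqueMax (r : ℕ) (M : Finset (Finset ℕ)) : ℕ :=
  sSup {k | ∃ P, IsPattern r P ∧ ∃ M' ⊆ M, IsPClique P M' ∧ M'.card = k}

/-- `L_r(n)`: the minimum of `L(M)` over all ordered `r`-matchings of size `n`. -/
noncomputable def minClique (r n : ℕ) : ℕ :=
  sInf {l | ∃ M, IsOrderedMatching r n M ∧ cliqueMax r M = l}

/-- `ℓ_s(x)`: `ℓ_2(x) = x^{1/3}` and `ℓ_s(x) = (1/2)·x^{1/(2^s-1)}` for `s ≥ 3`. -/
noncomputable def ell (s : ℕ) (x : ℝ) : ℝ :=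
  if s = 2 then x ^ ((1 : ℝ) / 3) else (1 / 2) * x ^ ((1 : ℝ) / ((2 : ℝ) ^ s - 1))


/-! ### Vertices of an edge -/

/-- The `i`-th vertex (in increasing order) of an `r`-element edge. -/
noncomputable def vtx (r : ℕ) (e : Finset ℕ) (i : Fin r) : ℕ :=
  if h : e.card = r then e.orderEmbOfFin h i else 0

lemma vtx_strictMono {r : ℕ} {e : Finset ℕ} (h : e.card = r) : StrictMono (vtx r e) := by
  intro i j hij
  simp only [vtx, h, dif_pos]
  exact (e.orderEmbOfFin h).strictMono hij

lemma vtx_mem {r : ℕ} {e : Finset ℕ} (h : e.card = r) (i : Fin r) : vtx r e i ∈ e := by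
  simp only [vtx, h, dif_pos]
  exact e.orderEmbOfFin_mem h i

lemma exists_vtx {r : ℕ} {e : Finset ℕ} (h : e.card = r) {x : ℕ} (hx : x ∈ e) :
    ∃ i, vtx r e i = x := by
  have h1 : x ∈ Set.range (e.orderEmbOfFin h) := by
    rw [Finset.range_orderEmbOfFin]; exact hx
  obtain ⟨i, hi⟩ := h1
  exact ⟨i, by simp only [vtx, h, dif_pos]; exact hi⟩

lemma image_vtx {r : ℕ} {e : Finset ℕ} (h : e.card = r) :
    Finset.univ.image (vtx r e) = e := by
  ext x
  simp only [Finset.mem_image, Finset.mem_univ, true_and]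
  constructor
  · rintro ⟨i, rfl⟩; exact vtx_mem h i
  · intro hx; exact exists_vtx h hx

lemma card_image_of_smono {e : Finset ℕ} {g : ℕ → ℕ}
    (hg : ∀ x ∈ e, ∀ y ∈ e, x < y → g x < g y) : (e.image g).card = e.card := by
  apply Finset.card_image_of_injOn
  intro x hx y hy hxy
  rcases lt_trichotomy x y with h | h | h
  · exact absurd hxy (hg x hx y hy h).ne
  · exact h
  · exact absurd hxy (hg y hy x hx h).ne'

lemma vtx_image {r : ℕ} {e : Finset ℕ} (h : e.card = r) {g : ℕ → ℕ}
    (hg : ∀ x ∈ e, ∀ y ∈ e, x < y → g x < g y) (i : Fin r) :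
    vtx r (e.image g) i = g (vtx r e i) := by
  have hc : (e.image g).card = r := (card_image_of_smono hg).trans h
  have := Finset.orderEmbOfFin_unique hc (f := fun i => g (vtx r e i))
    (fun x => Finset.mem_image_of_mem _ (vtx_mem h x))
    (fun a b hab => hg _ (vtx_mem h a) _ (vtx_mem h b) (vtx_strictMono h hab))
  simp only [vtx, hc, dif_pos]
  have h2 := congrFun this i
  simp only [vtx, h, dif_pos] at h2
  rw [← h2, dif_pos h]

lemma mem_mSupport {M : Finset (Finset ℕ)} {x : ℕ} : x ∈ mSupport M ↔ ∃ e ∈ M, x ∈ e := by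
  simp [mSupport, Finset.mem_sup]

lemma vtx_eq {r : ℕ} {M : Finset (Finset ℕ)} (hM : IsMatching r M) {e f : Finset ℕ}
    (he : e ∈ M) (hf : f ∈ M) {i j : Fin r} (h : vtx r e i = vtx r f j) : e = f ∧ i = j := by
  have hef : e = f := by
    by_contra hne
    exact Finset.disjoint_left.1 (hM.2 e he f hf hne) (vtx_mem (hM.1 e he) i)
      (h ▸ vtx_mem (hM.1 f hf) j)
  subst hef
  exact ⟨rfl, (vtx_strictMono (hM.1 e he)).injective h⟩

/-! ### Twins as indexed families -/

/-- Twins in `M`, given as two families of edges whose vertices compare in the same way. -/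
structure TwinFam (r : ℕ) (M : Finset (Finset ℕ)) {ι : Type} (e f : ι → Finset ℕ) : Prop where
  he : ∀ a, e a ∈ M
  hf : ∀ a, f a ∈ M
  hne : ∀ a b, e a ≠ f b
  inj : Function.Injective e
  cmp : ∀ a b i j, vtx r (e a) i < vtx r (e b) j ↔ vtx r (f a) i < vtx r (f b) j

lemma TwinFam.hasTwins {r : ℕ} {M : Finset (Finset ℕ)} (hM : IsMatching r M) {ι : Type} [Fintype ι]
    {e f : ι → Finset ℕ} (h : TwinFam r M e f) : HasTwins M (Fintype.card ι) := by
  classical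
  have finj : Function.Injective f := by
    intro a b hab
    apply h.inj
    have : vtx r (e a) = vtx r (e b) := by
      funext i
      have h1 := h.cmp a b i i
      have h2 := h.cmp b a i i
      rw [hab] at h1 h2
      have h3 := lt_irrefl (vtx r (f b) i)
      exact le_antisymm (not_lt.1 fun h' => h3 (h2.1 h')) (not_lt.1 fun h' => h3 (h1.1 h'))
    rw [← image_vtx (hM.1 _ (h.he a)), ← image_vtx (hM.1 _ (h.he b)), this]
  let φ : ι × Fin r → ℕ := fun p => vtx r (e p.1) p.2
  let ψ : ι × Fin r → ℕ := fun p => vtx r (f p.1) p.2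
  have hlt : ∀ p q, φ p < φ q ↔ ψ p < ψ q := fun p q => h.cmp p.1 q.1 p.2 q.2
  have hfac : ψ.FactorsThrough φ := by
    intro p q hpq
    have h1 := hlt p q
    have h2 := hlt q p
    rw [hpq] at h1 h2
    have h3 := lt_irrefl (φ q)
    exact le_antisymm (not_lt.1 fun h' => h3 (h2.2 h')) (not_lt.1 fun h' => h3 (h1.2 h'))
  let g : ℕ → ℕ := Function.extend φ ψ id
  have hg : ∀ p, g (φ p) = ψ p := fun p => hfac.extend_apply id p
  have sup1 : ∀ x, x ∈ mSupport (Finset.univ.image e) ↔ ∃ p, φ p = x := by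
    intro x
    simp only [mem_mSupport, Finset.mem_image, Finset.mem_univ, true_and, φ, Prod.exists]
    constructor
    · rintro ⟨_, ⟨a, rfl⟩, hx⟩
      obtain ⟨i, hi⟩ := exists_vtx (hM.1 _ (h.he a)) hx
      exact ⟨a, i, hi⟩
    · rintro ⟨a, i, rfl⟩
      exact ⟨_, ⟨a, rfl⟩, vtx_mem (hM.1 _ (h.he a)) i⟩
  have sup2 : ∀ x, x ∈ mSupport (Finset.univ.image f) ↔ ∃ p, ψ p = x := by
    intro x
    simp only [mem_mSupport, Finset.mem_image, Finset.mem_univ, true_and, ψ, Prod.exists]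
    constructor
    · rintro ⟨_, ⟨a, rfl⟩, hx⟩
      obtain ⟨i, hi⟩ := exists_vtx (hM.1 _ (h.hf a)) hx
      exact ⟨a, i, hi⟩
    · rintro ⟨a, i, rfl⟩
      exact ⟨_, ⟨a, rfl⟩, vtx_mem (hM.1 _ (h.hf a)) i⟩
  refine ⟨Finset.univ.image e, Finset.univ.image f, ?_, ?_, ?_, ⟨g, ⟨?_, ?_, ?_⟩, ?_, ?_⟩, ?_, ?_⟩
  · intro x hx
    obtain ⟨a, -, rfl⟩ := Finset.mem_image.1 hx
    exact h.he a
  · intro x hx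
    obtain ⟨a, -, rfl⟩ := Finset.mem_image.1 hx
    exact h.hf a
  · rw [Finset.disjoint_left]
    intro x h1 h2
    obtain ⟨p, hp⟩ := (sup1 x).1 h1
    obtain ⟨q, hq⟩ := (sup2 x).1 h2
    exact h.hne p.1 q.1 (vtx_eq hM (h.he _) (h.hf _) (hp.trans hq.symm)).1
  · intro x hx
    obtain ⟨p, rfl⟩ := (sup1 x).1 hx
    rw [hg]
    exact (sup2 _).2 ⟨p, rfl⟩
  · intro x hx y hy hxy
    obtain ⟨p, rfl⟩ := (sup1 x).1 hx
    obtain ⟨q, rfl⟩ := (sup1 y).1 hy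
    rw [hg, hg] at hxy
    have h1 := hlt p q
    have h2 := hlt q p
    omega
  · intro y hy
    obtain ⟨p, rfl⟩ := (sup2 y).1 hy
    exact ⟨φ p, (sup1 _).2 ⟨p, rfl⟩, hg p⟩
  · intro x hx y hy hxy
    obtain ⟨p, rfl⟩ := (sup1 x).1 hx
    obtain ⟨q, rfl⟩ := (sup1 y).1 hy
    rw [hg, hg]
    exact (hlt p q).1 hxy
  · rw [Finset.image_image]
    apply Finset.image_congr
    intro a _
    show f a = (e a).image g
    rw [← image_vtx (hM.1 _ (h.he a)), Finset.image_image, ← image_vtx (hM.1 _ (h.hf a))]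
    apply Finset.image_congr
    intro i _
    exact (hg (a, i)).symm
  · rw [Finset.card_image_of_injective _ h.inj, Finset.card_univ]
  · rw [Finset.card_image_of_injective _ finj, Finset.card_univ]

lemma HasTwins.twinFam {r : ℕ} (hr : 1 ≤ r) {M : Finset (Finset ℕ)} (hM : IsMatching r M) {k : ℕ}
    (h : HasTwins M k) : ∃ e f : Fin k → Finset ℕ, TwinFam r M e f := by
  obtain ⟨M₁, M₂, h1, h2, hd, ⟨g, hb, hg, hN⟩, hk, -⟩ := h
  let E := (M₁.equivFinOfCardEq hk).symm
  have hE : ∀ a, (E a : Finset ℕ) ∈ M₁ := fun a => (E a).2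
  have hEc : ∀ a, (E a : Finset ℕ).card = r := fun a => hM.1 _ (h1 (hE a))
  have hsup : ∀ a i, vtx r (E a) i ∈ mSupport M₁ := fun a i =>
    mem_mSupport.2 ⟨_, hE a, vtx_mem (hEc a) i⟩
  have hv : ∀ a i, vtx r ((E a : Finset ℕ).image g) i = g (vtx r (E a) i) := by
    intro a i
    apply vtx_image (hEc a)
    intro x hx y hy
    exact hg x (mem_mSupport.2 ⟨_, hE a, hx⟩) y (mem_mSupport.2 ⟨_, hE a, hy⟩)
  have hF : ∀ a, (E a : Finset ℕ).image g ∈ M₂ := by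
    intro a
    rw [hN]
    exact Finset.mem_image_of_mem (fun e => Finset.image g e) (hE a)
  refine ⟨fun a => E a, fun a => (E a : Finset ℕ).image g, fun a => h1 (hE a),
    fun a => h2 (hF a), ?_, ?_, ?_⟩
  · intro a b hab
    refine Finset.disjoint_left.1 hd (hsup a ⟨0, hr⟩) (mem_mSupport.2 ⟨_, hF b, ?_⟩)
    rw [← hab]
    exact vtx_mem (hEc a) _
  · intro a b hab
    exact E.injective (Subtype.ext hab)
  · intro a b i j
    rw [hv, hv]
    constructor
    · exact hg _ (hsup a i) _ (hsup b j)
    · intro hlt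
      rcases lt_trichotomy (vtx r (E a) i) (vtx r (E b) j) with h | h | h
      · exact h
      · rw [h] at hlt; exact absurd hlt (lt_irrefl _)
      · exact absurd (hg _ (hsup b j) _ (hsup a i) h) hlt.not_gt

lemma hasTwins_bdd (M : Finset (Finset ℕ)) : BddAbove {k | HasTwins M k} := by
  refine ⟨M.card, ?_⟩
  rintro k ⟨M₁, M₂, h1, -, -, -, hk, -⟩
  rw [← hk]
  exact Finset.card_le_card h1

lemma hasTwins_zero (M : Finset (Finset ℕ)) : HasTwins M 0 := by
  refine ⟨∅, ∅, by simp, by simp, by simp [mSupport], ⟨id, ?_, ?_, ?_⟩, rfl, rfl⟩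
  · simp [mSupport]
  · simp [mSupport]
  · simp

lemma le_twinMax {M : Finset (Finset ℕ)} {k : ℕ} (h : HasTwins M k) : k ≤ twinMax M :=
  le_csSup (hasTwins_bdd M) h

lemma hasTwins_twinMax (M : Finset (Finset ℕ)) : HasTwins M (twinMax M) :=
  Nat.sSup_mem (s := {k | HasTwins M k}) ⟨0, hasTwins_zero M⟩ (hasTwins_bdd M)

/-- Every `r`-matching of size `s` has twins of size at least `minTwins r s`. -/
lemma exists_twinFam_of_card {r : ℕ} (hr : 1 ≤ r) {S : Finset (Finset ℕ)} (hS : IsMatching r S)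
    {s : ℕ} (hs : S.card = s) :
    ∃ k, minTwins r s ≤ k ∧ ∃ e f : Fin k → Finset ℕ, TwinFam r S e f := by
  classical
  -- the rank function
  let g : ℕ → ℕ := fun x => ((mSupport S).filter (· ≤ x)).card
  have hg : ∀ x ∈ mSupport S, ∀ y ∈ mSupport S, x < y → g x < g y := by
    intro x _ y hy hxy
    apply Finset.card_lt_card
    refine ⟨?_, ?_⟩
    · intro z hz
      rw [Finset.mem_filter] at hz ⊢
      exact ⟨hz.1, hz.2.trans hxy.le⟩
    · intro hsub
      have := hsub (Finset.mem_filter.2 ⟨hy, le_refl y⟩)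
      exact absurd (Finset.mem_filter.1 this).2 (not_le.2 hxy)
  have hginj : Set.InjOn g (mSupport S : Set ℕ) := by
    intro x hx y hy hxy
    rcases lt_trichotomy x y with h | h | h
    · exact absurd hxy (hg x hx y hy h).ne
    · exact h
    · exact absurd hxy (hg y hy x hx h).ne'
  have hge : ∀ e ∈ S, ∀ x ∈ e, ∀ y ∈ e, x < y → g x < g y := fun e he x hx y hy =>
    hg x (mem_mSupport.2 ⟨e, he, hx⟩) y (mem_mSupport.2 ⟨e, he, hy⟩)
  have hcardsup : (mSupport S).card = r * s := by
    have : mSupport S = S.biUnion id := by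
      ext x; simp [mem_mSupport]
    rw [this, Finset.card_biUnion]
    · simp only [id]
      rw [Finset.sum_congr rfl (fun e he => hS.1 e he)]
      simp [hs, mul_comm]
    · intro e he f hf hef
      exact hS.2 e he f hf hef
  have hedge_inj : Set.InjOn (fun e : Finset ℕ => e.image g) (S : Set (Finset ℕ)) := by
    intro e he f hf hef
    have h0 : vtx r e ⟨0, hr⟩ = vtx r f ⟨0, hr⟩ := by
      apply hginj (mem_mSupport.2 ⟨e, he, vtx_mem (hS.1 e he) _⟩)
        (mem_mSupport.2 ⟨f, hf, vtx_mem (hS.1 f hf) _⟩)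
      rw [← vtx_image (hS.1 e he) (hge e he), ← vtx_image (hS.1 f hf) (hge f hf)]
      simp only at hef
      rw [hef]
    exact (vtx_eq hS he hf h0).1
  let S' := S.image fun e => e.image g
  have hS'm : IsMatching r S' := by
    constructor
    · intro e' he'
      obtain ⟨e, he, rfl⟩ := Finset.mem_image.1 he'
      rw [card_image_of_smono (hge e he), hS.1 e he]
    · intro e' he' f' hf' hne
      obtain ⟨e, he, rfl⟩ := Finset.mem_image.1 he'
      obtain ⟨f, hf, rfl⟩ := Finset.mem_image.1 hf'
      rw [Finset.disjoint_left]
      intro x hx hx'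
      obtain ⟨y, hy, rfl⟩ := Finset.mem_image.1 hx
      obtain ⟨z, hz, hzy⟩ := Finset.mem_image.1 hx'
      have := hginj (mem_mSupport.2 ⟨f, hf, hz⟩) (mem_mSupport.2 ⟨e, he, hy⟩) hzy
      subst this
      refine Finset.disjoint_left.1 (hS.2 e he f hf ?_) hy hz
      rintro rfl
      exact hne rfl
  have hsup' : mSupport S' = (mSupport S).image g := by
    ext x
    simp only [mem_mSupport, S', Finset.mem_image]
    constructor
    · rintro ⟨_, ⟨e, he, rfl⟩, hx⟩
      obtain ⟨y, hy, rfl⟩ := Finset.mem_image.1 hx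
      exact ⟨y, ⟨e, he, hy⟩, rfl⟩
    · rintro ⟨y, ⟨e, he, hy⟩, rfl⟩
      exact ⟨_, ⟨e, he, rfl⟩, Finset.mem_image_of_mem _ hy⟩
  have hord : IsOrderedMatching r s S' := by
    refine ⟨hS'm, ?_, ?_⟩
    · rw [Finset.card_image_of_injOn hedge_inj, hs]
    · apply Finset.eq_of_subset_of_card_le
      · rw [hsup']
        intro x hx
        obtain ⟨y, hy, rfl⟩ := Finset.mem_image.1 hx
        rw [Finset.mem_Icc]
        constructor
        · exact Finset.card_pos.2 ⟨y, Finset.mem_filter.2 ⟨hy, le_refl y⟩⟩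
        · rw [← hcardsup]
          exact Finset.card_le_card (Finset.filter_subset _ _)
      · rw [hsup', Finset.card_image_of_injOn hginj, hcardsup]
        simp
  refine ⟨twinMax S', Nat.sInf_le ⟨S', hord, rfl⟩, ?_⟩
  obtain ⟨e', f', h⟩ := (hasTwins_twinMax S').twinFam hr hS'm
  have hpe : ∀ a, ∃ e ∈ S, e.image g = e' a := fun a => by
    simpa [S'] using h.he a
  have hpf : ∀ a, ∃ e ∈ S, e.image g = f' a := fun a => by
    simpa [S'] using h.hf a
  choose e he hee using hpe
  choose f hf hff using hpf
  have hv : ∀ e ∈ S, ∀ f ∈ S, ∀ i j, vtx r e i < vtx r f j ↔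
      vtx r (e.image g) i < vtx r (f.image g) j := by
    intro e he f hf i j
    rw [vtx_image (hS.1 e he) (hge e he), vtx_image (hS.1 f hf) (hge f hf)]
    have h1 : vtx r e i ∈ mSupport S := mem_mSupport.2 ⟨e, he, vtx_mem (hS.1 e he) _⟩
    have h2 : vtx r f j ∈ mSupport S := mem_mSupport.2 ⟨f, hf, vtx_mem (hS.1 f hf) _⟩
    constructor
    · exact hg _ h1 _ h2
    · intro hlt
      rcases lt_trichotomy (vtx r e i) (vtx r f j) with h | h | h
      · exact h
      · rw [h] at hlt; exact absurd hlt (lt_irrefl _)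
      · exact absurd (hg _ h2 _ h1 h) hlt.not_gt
  refine ⟨e, f, he, hf, ?_, ?_, ?_⟩
  · intro a b hab
    apply h.hne a b
    rw [← hee, ← hff, hab]
  · intro a b hab
    apply h.inj
    rw [← hee, ← hee, hab]
  · intro a b i j
    rw [hv _ (he a) _ (he b), hv _ (hf a) _ (hf b), hee, hee, hff, hff]
    exact h.cmp a b i j

lemma exists_orderedMatching (r n : ℕ) (hr : 1 ≤ r) : ∃ M, IsOrderedMatching r n M := by
  have hdis : ∀ a b : ℕ, a ≠ b →
      Disjoint (Finset.Icc (r * a + 1) (r * a + r)) (Finset.Icc (r * b + 1) (r * b + r)) := by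
    intro a b hab
    rw [Finset.disjoint_left]
    intro x hx hy
    rw [Finset.mem_Icc] at hx hy
    rcases lt_or_gt_of_ne hab with h | h
    · have : r * (a + 1) ≤ r * b := Nat.mul_le_mul_left _ h
      rw [mul_add] at this
      omega
    · have : r * (b + 1) ≤ r * a := Nat.mul_le_mul_left _ h
      rw [mul_add] at this
      omega
  refine ⟨(Finset.range n).image fun a => Finset.Icc (r * a + 1) (r * a + r), ⟨?_, ?_⟩, ?_, ?_⟩
  · intro e he
    obtain ⟨a, -, rfl⟩ := Finset.mem_image.1 he
    rw [Nat.card_Icc]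
    omega
  · intro e he f hf hef
    obtain ⟨a, -, rfl⟩ := Finset.mem_image.1 he
    obtain ⟨b, -, rfl⟩ := Finset.mem_image.1 hf
    apply hdis
    rintro rfl
    exact hef rfl
  · rw [Finset.card_image_of_injOn, Finset.card_range]
    intro a _ b _ hab
    by_contra hne
    have h1 := hdis a b hne
    simp only at hab
    rw [← hab, disjoint_self, Finset.bot_eq_empty, Finset.Icc_eq_empty_iff] at h1
    omega
  · ext x
    simp only [mem_mSupport, Finset.mem_image, Finset.mem_range]
    constructor
    · rintro ⟨_, ⟨a, ha, rfl⟩, hx⟩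
      rw [Finset.mem_Icc] at hx ⊢
      have : r * (a + 1) ≤ r * n := Nat.mul_le_mul_left _ ha
      rw [mul_add] at this
      omega
    · intro hx
      rw [Finset.mem_Icc] at hx
      refine ⟨_, ⟨(x - 1) / r, ?_, rfl⟩, ?_⟩
      · rw [Nat.div_lt_iff_lt_mul (by omega), mul_comm]
        omega
      · have h1 := Nat.div_add_mod (x - 1) r
        have h2 := Nat.mod_lt (x - 1) (show r > 0 by omega)
        rw [Finset.mem_Icc]
        omega


/-! ### Permutation twins -/

lemma permTwins_bound {n k : ℕ} {π : Equiv.Perm (Fin n)} (h : PermTwins π k) : 2 * k ≤ n := by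
  obtain ⟨a, b, ha, hb, hab, -⟩ := h
  have hinj : Function.Injective (Sum.elim a b) :=
    Function.Injective.sumElim ha.injective hb.injective hab
  have := Fintype.card_le_of_injective _ hinj
  simp at this
  omega

lemma permTau_set_bdd (n : ℕ) : BddAbove {k | ∀ π : Equiv.Perm (Fin n), PermTwins π k} :=
  ⟨n, fun k hk => by have := permTwins_bound (hk 1); omega⟩

lemma permTau_spec (n : ℕ) : ∀ π : Equiv.Perm (Fin n), PermTwins π (permTau n) := by
  refine Nat.sSup_mem (s := {k | ∀ π : Equiv.Perm (Fin n), PermTwins π k}) ⟨0, fun π => ?_⟩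
    (permTau_set_bdd n)
  exact ⟨Fin.elim0, Fin.elim0, fun i => i.elim0, fun i => i.elim0, fun i => i.elim0,
    fun i => i.elim0⟩

lemma two_mul_permTau_le (n : ℕ) : 2 * permTau n ≤ n := permTwins_bound (permTau_spec n 1)

lemma exists_rank {β : Type} (S : Finset β) {k : ℕ} (hk : S.card = k) (α : β → ℕ)
    (hα : Set.InjOn α (S : Set β)) :
    ∃ E : S ≃ Fin k, ∀ e f : S, E e < E f ↔ α e < α f := by
  have hinj : Function.Injective (fun e : S => α e) := fun e f h =>
    Subtype.ext (hα e.2 f.2 h)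
  let _ : LinearOrder S := LinearOrder.lift' (fun e : S => α e) hinj
  let F : Fin k ≃o S := Fintype.orderIsoFinOfCardEq S (by simpa using hk)
  refine ⟨F.symm.toEquiv, fun e f => ?_⟩
  exact F.symm.lt_iff_lt

/-- If the pattern formed by two edges of `S` is determined by how they compare in two
linear orders, then permutation twins give twins. -/
lemma hasTwins_permTau {r : ℕ} {M S : Finset (Finset ℕ)} (hM : IsMatching r M) (hSM : S ⊆ M)
    {k : ℕ} (hk : S.card = k) (α β : Finset ℕ → ℕ)
    (hα : Set.InjOn α (S : Set (Finset ℕ))) (hβ : Set.InjOn β (S : Set (Finset ℕ)))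
    (hpat : ∀ e ∈ S, ∀ f ∈ S, ∀ e' ∈ S, ∀ f' ∈ S, e ≠ f → e' ≠ f' →
      (α e < α f ↔ α e' < α f') → (β e < β f ↔ β e' < β f') →
      ∀ i j, vtx r e i < vtx r f j ↔ vtx r e' i < vtx r f' j) :
    HasTwins M (permTau k) := by
  obtain ⟨A, hA⟩ := exists_rank S hk α hα
  obtain ⟨B, hB⟩ := exists_rank S hk β hβ
  obtain ⟨a, b, ha, hb, hab, hπ⟩ := permTau_spec k (A.symm.trans B)
  have key : TwinFam r M (fun i => (A.symm (a i) : Finset ℕ)) (fun i => (A.symm (b i) : Finset ℕ)) := by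
    refine ⟨fun i => hSM (A.symm (a i)).2, fun i => hSM (A.symm (b i)).2, ?_, ?_, ?_⟩
    · intro i j hij
      exact hab i j (A.symm.injective (Subtype.ext hij))
    · intro i j hij
      exact ha.injective (A.symm.injective (Subtype.ext hij))
    · intro u v i j
      by_cases huv : u = v
      · subst huv
        rw [(vtx_strictMono (hM.1 _ (hSM (A.symm (a u)).2))).lt_iff_lt,
          (vtx_strictMono (hM.1 _ (hSM (A.symm (b u)).2))).lt_iff_lt]
      · apply hpat _ (A.symm (a u)).2 _ (A.symm (a v)).2 _ (A.symm (b u)).2 _ (A.symm (b v)).2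
        · intro h
          exact huv (ha.injective (A.symm.injective (Subtype.ext h)))
        · intro h
          exact huv (hb.injective (A.symm.injective (Subtype.ext h)))
        · rw [← hA, ← hA]
          simp [ha.lt_iff_lt, hb.lt_iff_lt]
        · rw [← hB, ← hB]
          exact hπ u v
  have := key.hasTwins hM
  rwa [Fintype.card_fin] at this

/-! ### Mirsky's theorem and cliques of pairs -/

lemma mirsky {β : Type} [DecidableEq β] (R : β → β → Prop) (htr : ∀ a b c, R a b → R b c → R a c)
    (hirr : ∀ a, ¬ R a a) (m : ℕ) : ∀ (j : ℕ) (T : Finset β), j * m < T.card →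
    (∃ C ⊆ T, C.card = j + 1 ∧ (∀ a ∈ C, ∀ b ∈ C, a ≠ b → R a b ∨ R b a) ∧
      ∃ c ∈ C, ∀ a ∈ C, a ≠ c → R c a) ∨
    (∃ C ⊆ T, C.card = m + 1 ∧ ∀ a ∈ C, ∀ b ∈ C, ¬ R a b) := by
  classical
  intro j
  induction j with
  | zero =>
    intro T hT
    left
    rw [zero_mul] at hT
    obtain ⟨c, hc⟩ := Finset.card_pos.1 hT
    refine ⟨{c}, by simpa using hc, by simp, ?_, c, by simp, ?_⟩
    · intro a ha b hb hab
      simp at ha hb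
      exact absurd (ha.trans hb.symm) hab
    · intro a ha hac
      simp at ha
      exact absurd ha hac
  | succ j ih =>
    intro T hT
    let Mn := T.filter fun a => ∀ b ∈ T, ¬ R b a
    by_cases hMn : m + 1 ≤ Mn.card
    · right
      obtain ⟨C, hC, hcard⟩ := Finset.exists_subset_card_eq hMn
      refine ⟨C, hC.trans (Finset.filter_subset _ _), hcard, ?_⟩
      intro a ha b hb
      exact (Finset.mem_filter.1 (hC hb)).2 a (Finset.mem_filter.1 (hC ha)).1
    · have hsd : j * m < (T \ Mn).card := by
        have hsub : Mn ⊆ T := Finset.filter_subset _ _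
        rw [Finset.card_sdiff_of_subset hsub]
        rw [add_mul, one_mul] at hT
        omega
      rcases ih _ hsd with ⟨C, hC, hcard, hch, c, hc, hmin⟩ | ⟨C, hC, h⟩
      · left
        have hcT := Finset.mem_sdiff.1 (hC hc)
        have : ∃ b ∈ T, R b c := by
          by_contra hcon
          push Not at hcon
          exact hcT.2 (Finset.mem_filter.2 ⟨hcT.1, hcon⟩)
        obtain ⟨b, hb, hbc⟩ := this
        have hball : ∀ a ∈ C, R b a := by
          intro a ha
          by_cases hac : a = c
          · rw [hac]; exact hbc
          · exact htr _ _ _ hbc (hmin a ha hac)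
        have hbC : b ∉ C := fun h => hirr b (hball b h)
        refine ⟨insert b C, ?_, ?_, ?_, b, by simp, ?_⟩
        · intro x hx
          rcases Finset.mem_insert.1 hx with rfl | hx
          · exact hb
          · exact (Finset.mem_sdiff.1 (hC hx)).1
        · rw [Finset.card_insert_of_notMem hbC, hcard]
        · intro x hx y hy hxy
          rcases Finset.mem_insert.1 hx with hx' | hx' <;>
            rcases Finset.mem_insert.1 hy with hy' | hy'
          · exact absurd (hx'.trans hy'.symm) hxy
          · rw [hx']; exact Or.inl (hball y hy')
          · rw [hy']; exact Or.inr (hball x hx')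
          · exact hch x hx' y hy' hxy
        · intro a ha hab
          rcases Finset.mem_insert.1 ha with rfl | ha
          · exact absurd rfl hab
          · exact hball a ha
      · right
        exact ⟨C, hC.trans Finset.sdiff_subset, h⟩

/-- Among `k ^ 3` pairs `y < z` one finds `k` all of whose pairs form the same pattern. -/
lemma pair_clique {β : Type} [DecidableEq β] (y z : β → ℕ) (S : Finset β)
    (hyz : ∀ e ∈ S, y e < z e)
    (hy : Set.InjOn y (S : Set β)) (hz : Set.InjOn z (S : Set β))
    (hne : ∀ e ∈ S, ∀ f ∈ S, y e ≠ z f) (k : ℕ) (hk : k ^ 3 ≤ S.card) :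
    ∃ C ⊆ S, C.card = k ∧ ∀ e ∈ C, ∀ f ∈ C, ∀ e' ∈ C, ∀ f' ∈ C, e ≠ f → e' ≠ f' →
      (y e < y f ↔ y e' < y f') →
      (z e < z f ↔ z e' < z f') ∧ (y e < z f ↔ y e' < z f') ∧ (z e < y f ↔ z e' < y f') := by
  rcases k with _ | k
  · exact ⟨∅, by simp, rfl, by simp⟩
  have h1 : k * (k * k) < S.card := by
    refine lt_of_lt_of_le ?_ hk
    nlinarith [Nat.zero_le (k * k), Nat.zero_le k]
  rcases mirsky (fun e f => z e < y f ∧ y e < z e ∧ y f < z f) (fun a b c h h' => by omega)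
    (fun a h => by omega) (k * k) k S h1 with
    ⟨C, hC, hcard, hch, -⟩ | ⟨C, hC, hcard, hanti⟩
  · refine ⟨C, hC, hcard, ?_⟩
    intro e he f hf e' he' f' hf' hef hef' h
    have a1 := hch e he f hf hef
    have a2 := hch e' he' f' hf' hef'
    have b1 := hyz e (hC he)
    have b2 := hyz f (hC hf)
    have b3 := hyz e' (hC he')
    have b4 := hyz f' (hC hf')
    omega
  · have hcross : ∀ e ∈ C, ∀ f ∈ C, y e < z f := by
      intro e he f hf
      have := hanti f hf e he
      have := hyz e (hC he)
      have := hyz f (hC hf)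
      have := hne e (hC he) f (hC hf)
      omega
    rcases mirsky (fun e f => y e < y f ∧ z e < z f) (fun a b c h h' => by omega)
      (fun a h => by omega) k k C (by omega) with
      ⟨D, hD, hDcard, hch, -⟩ | ⟨D, hD, hDcard, hanti'⟩
    · refine ⟨D, hD.trans hC, hDcard, ?_⟩
      intro e he f hf e' he' f' hf' hef hef' h
      have a1 := hch e he f hf hef
      have a2 := hch e' he' f' hf' hef'
      have b1 := hcross e (hD he) f (hD hf)
      have b2 := hcross f (hD hf) e (hD he)
      have b3 := hcross e' (hD he') f' (hD hf')
      have b4 := hcross f' (hD hf') e' (hD he')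
      omega
    · refine ⟨D, hD.trans hC, hDcard, ?_⟩
      intro e he f hf e' he' f' hf' hef hef' h
      have a1 := hanti' e he f hf
      have a2 := hanti' e' he' f' hf'
      have a3 := hanti' f hf e he
      have a4 := hanti' f' hf' e' he'
      have b1 := hcross e (hD he) f (hD hf)
      have b2 := hcross f (hD hf) e (hD he)
      have b3 := hcross e' (hD he') f' (hD hf')
      have b4 := hcross f' (hD hf') e' (hD he')
      have c1 : y e ≠ y f := fun h => hef (hy (hC (hD he)) (hC (hD hf)) h)
      have c2 : y e' ≠ y f' := fun h => hef' (hy (hC (hD he')) (hC (hD hf')) h)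
      have c3 : z e ≠ z f := fun h => hef (hz (hC (hD he)) (hC (hD hf)) h)
      have c4 : z e' ≠ z f' := fun h => hef' (hz (hC (hD he')) (hC (hD hf')) h)
      omega

/-! ### The cut -/

/-- Twins on the left and on the right of a cut can be combined. -/
lemma hasTwins_of_cut {r : ℕ} (hr : 1 ≤ r) {M : Finset (Finset ℕ)} (hM : IsMatching r M) (s c : ℕ)
    (hL : s ≤ (M.filter fun e => ∀ x ∈ e, x ≤ c).card)
    (hR : s ≤ (M.filter fun e => ∀ x ∈ e, c < x).card) :
    2 * minTwins r s ≤ twinMax M := by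
  obtain ⟨L, hLs, hLc⟩ := Finset.exists_subset_card_eq hL
  obtain ⟨R, hRs, hRc⟩ := Finset.exists_subset_card_eq hR
  have hLM : L ⊆ M := hLs.trans (Finset.filter_subset _ _)
  have hRM : R ⊆ M := hRs.trans (Finset.filter_subset _ _)
  have sub : ∀ T ⊆ M, IsMatching r T := fun T hT =>
    ⟨fun e he => hM.1 e (hT he), fun e he f hf => hM.2 e (hT he) f (hT hf)⟩
  obtain ⟨k, hk, e, f, hef⟩ := exists_twinFam_of_card hr (sub L hLM) hLc
  obtain ⟨k', hk', e', f', hef'⟩ := exists_twinFam_of_card hr (sub R hRM) hRc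
  have vL : ∀ g ∈ L, ∀ i, vtx r g i ≤ c := fun g hg i =>
    (Finset.mem_filter.1 (hLs hg)).2 _ (vtx_mem (hM.1 g (hLM hg)) i)
  have vR : ∀ g ∈ R, ∀ i, c < vtx r g i := fun g hg i =>
    (Finset.mem_filter.1 (hRs hg)).2 _ (vtx_mem (hM.1 g (hRM hg)) i)
  have hLR : ∀ g ∈ L, ∀ h ∈ R, g ≠ h := by
    rintro g hg _ hh rfl
    have := vL g hg ⟨0, hr⟩
    have := vR g hh ⟨0, hr⟩
    omega
  have key : TwinFam r M (Sum.elim e e') (Sum.elim f f') := by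
    refine ⟨?_, ?_, ?_, ?_, ?_⟩
    · rintro (a | a)
      · exact hLM (hef.he a)
      · exact hRM (hef'.he a)
    · rintro (a | a)
      · exact hLM (hef.hf a)
      · exact hRM (hef'.hf a)
    · rintro (a | a) (b | b)
      · exact hef.hne a b
      · exact hLR _ (hef.he a) _ (hef'.hf b)
      · exact (hLR _ (hef.hf b) _ (hef'.he a)).symm
      · exact hef'.hne a b
    · exact Function.Injective.sumElim hef.inj hef'.inj fun a b => hLR _ (hef.he a) _ (hef'.he b)
    · rintro (a | a) (b | b) i j
      · exact hef.cmp a b i j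
      · have h1 := vL _ (hef.he a) i
        have h2 := vL _ (hef.hf a) i
        have h3 := vR _ (hef'.he b) j
        have h4 := vR _ (hef'.hf b) j
        simp only [Sum.elim_inl, Sum.elim_inr]
        omega
      · have h1 := vL _ (hef.he b) j
        have h2 := vL _ (hef.hf b) j
        have h3 := vR _ (hef'.he a) i
        have h4 := vR _ (hef'.hf a) i
        simp only [Sum.elim_inl, Sum.elim_inr]
        omega
      · exact hef'.cmp a b i j
  have h := le_twinMax (key.hasTwins hM)
  simp only [Fintype.card_sum, Fintype.card_fin] at h
  omega

/-- Either we gain from a cut, or many edges cross a single cut. -/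
lemma cut_or_cross {r n : ℕ} (hr : 1 ≤ r) {M : Finset (Finset ℕ)} (hM : IsOrderedMatching r n M) :
    2 * minTwins r (n / 3) ≤ twinMax M ∨
    ∃ c, ∃ S ⊆ M, n ≤ 3 * S.card ∧ ∀ e ∈ S, (∃ x ∈ e, x ≤ c) ∧ (∃ x ∈ e, c < x) := by
  classical
  let F : ℕ → Finset (Finset ℕ) := fun c => M.filter fun e => ∀ x ∈ e, x ≤ c
  let G : ℕ → Finset (Finset ℕ) := fun c => M.filter fun e => ∀ x ∈ e, c < x
  have hex : ∃ c, n / 3 ≤ (F c).card := by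
    refine ⟨r * n, ?_⟩
    have : F (r * n) = M := by
      apply Finset.filter_true_of_mem
      intro e he x hx
      have : x ∈ mSupport M := mem_mSupport.2 ⟨e, he, hx⟩
      rw [hM.2.2, Finset.mem_Icc] at this
      exact this.2
    rw [this, hM.2.1]
    omega
  let c := Nat.find hex
  have hc : n / 3 ≤ (F c).card := Nat.find_spec hex
  by_cases hG : n / 3 ≤ (G c).card
  · left
    exact hasTwins_of_cut hr hM.1 _ c hc hG
  right
  have hF : (F c).card ≤ n / 3 := by
    rcases Nat.eq_zero_or_pos c with h0 | h0
    · have : F c = ∅ := by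
        apply Finset.filter_false_of_mem
        intro e he hall
        have hv := vtx_mem (hM.1.1 e he) ⟨0, hr⟩
        have h1 := hall _ hv
        have : vtx r e ⟨0, hr⟩ ∈ mSupport M := mem_mSupport.2 ⟨e, he, hv⟩
        rw [hM.2.2, Finset.mem_Icc] at this
        omega
      rw [this]
      simp
    · have hlt : (F (c - 1)).card < n / 3 := by
        have := Nat.find_min hex (m := c - 1) (by omega)
        omega
      have hone : (M.filter fun e => c ∈ e).card ≤ 1 := by
        rw [Finset.card_le_one]
        intro e he f hf
        rw [Finset.mem_filter] at he hf
        by_contra hne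
        exact Finset.disjoint_left.1 (hM.1.2 e he.1 f hf.1 hne) he.2 hf.2
      have hsub : F c ⊆ F (c - 1) ∪ M.filter fun e => c ∈ e := by
        intro e he
        rw [Finset.mem_filter] at he
        rw [Finset.mem_union, Finset.mem_filter, Finset.mem_filter]
        by_cases hce : c ∈ e
        · exact Or.inr ⟨he.1, hce⟩
        · refine Or.inl ⟨he.1, fun x hx => ?_⟩
          have h1 := he.2 x hx
          have h2 : x ≠ c := by rintro rfl; exact hce hx
          omega
      have := (Finset.card_le_card hsub).trans (Finset.card_union_le _ _)
      omega
  refine ⟨c, M \ (F c ∪ G c), Finset.sdiff_subset, ?_, ?_⟩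
  · have h1 := Finset.le_card_sdiff (F c ∪ G c) M
    have h2 := Finset.card_union_le (F c) (G c)
    rw [hM.2.1] at h1
    omega
  · intro e he
    rw [Finset.mem_sdiff, Finset.mem_union, Finset.mem_filter, Finset.mem_filter] at he
    obtain ⟨he, hn⟩ := he
    push Not at hn
    obtain ⟨x, hx, hx'⟩ := hn.1 he
    obtain ⟨y, hy, hy'⟩ := hn.2 he
    exact ⟨⟨y, hy, hy'⟩, ⟨x, hx, hx'⟩⟩

/-! ### The cases `r = 2` and `r = 3` -/

lemma vtx_injOn {r : ℕ} {M S : Finset (Finset ℕ)} (hM : IsMatching r M) (hS : S ⊆ M) (i : Fin r) :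
    Set.InjOn (fun e => vtx r e i) (S : Set (Finset ℕ)) :=
  fun _ he _ hf h => (vtx_eq hM (hS he) (hS hf) h).1

lemma case_two {n : ℕ} {M : Finset (Finset ℕ)} (hM : IsOrderedMatching 2 n M) {k : ℕ}
    (hk : 3 * k ≤ n) :
    2 * minTwins 2 (n / 3) ≤ twinMax M ∨ permTau k ≤ twinMax M := by
  rcases cut_or_cross (by norm_num) hM with h | ⟨c, S, hSM, hcard, hS⟩
  · exact Or.inl h
  right
  apply le_twinMax
  obtain ⟨T, hT, hTk⟩ := Finset.exists_subset_card_eq (show k ≤ S.card by omega)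
  have hTM := hT.trans hSM
  have hv : ∀ e ∈ T, vtx 2 e 0 ≤ c ∧ c < vtx 2 e 1 := by
    intro e he
    obtain ⟨⟨x, hx, hxc⟩, ⟨y, hy, hyc⟩⟩ := hS e (hT he)
    have hcd := hM.1.1 e (hTM he)
    have h01 : vtx 2 e 0 < vtx 2 e 1 := vtx_strictMono hcd (by decide)
    obtain ⟨i, rfl⟩ := exists_vtx hcd hx
    obtain ⟨j, rfl⟩ := exists_vtx hcd hy
    fin_cases i <;> fin_cases j <;> simp at hxc hyc <;> omega
  refine hasTwins_permTau hM.1 hTM hTk (fun e => vtx 2 e 0) (fun e => vtx 2 e 1)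
    (vtx_injOn hM.1 hTM _) (vtx_injOn hM.1 hTM _) ?_
  intro e he f hf e' he' f' hf' _ _ h1 h2 i j
  have a1 := hv e he
  have a2 := hv f hf
  have a3 := hv e' he'
  have a4 := hv f' hf'
  fin_cases i <;> fin_cases j <;> simp <;> omega

lemma case_three {n : ℕ} {M : Finset (Finset ℕ)} (hM : IsOrderedMatching 3 n M) {k : ℕ}
    (hk : 6 * k ^ 3 ≤ n) :
    2 * minTwins 3 (n / 3) ≤ twinMax M ∨ permTau k ≤ twinMax M := by
  rcases cut_or_cross (by norm_num) hM with h | ⟨c, S, hSM, hcard, hS⟩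
  · exact Or.inl h
  right
  apply le_twinMax
  have hm : ∀ e ∈ M, vtx 3 e 0 < vtx 3 e 1 ∧ vtx 3 e 1 < vtx 3 e 2 := fun e he =>
    ⟨vtx_strictMono (hM.1.1 e he) (by decide), vtx_strictMono (hM.1.1 e he) (by decide)⟩
  have hv : ∀ e ∈ S, vtx 3 e 0 ≤ c ∧ c < vtx 3 e 2 := by
    intro e he
    obtain ⟨⟨x, hx, hxc⟩, ⟨y, hy, hyc⟩⟩ := hS e he
    have hcd := hM.1.1 e (hSM he)
    have h01 := hm e (hSM he)
    obtain ⟨i, rfl⟩ := exists_vtx hcd hx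
    obtain ⟨j, rfl⟩ := exists_vtx hcd hy
    fin_cases i <;> fin_cases j <;> simp at hxc hyc <;> omega
  have hsplit := Finset.card_filter_add_card_filter_not (s := S) (fun e => c < vtx 3 e 1)
  have hpick : k ^ 3 ≤ (S.filter fun e => c < vtx 3 e 1).card ∨
      k ^ 3 ≤ (S.filter fun e => ¬ c < vtx 3 e 1).card := by omega
  have hne : ∀ i j : Fin 3, i ≠ j → ∀ e ∈ M, ∀ f ∈ M, vtx 3 e i ≠ vtx 3 f j :=
    fun i j hij e he f hf h => hij (vtx_eq hM.1 he hf h).2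
  rcases hpick with hp | hp
  · have hsub : (S.filter fun e => c < vtx 3 e 1) ⊆ M := (Finset.filter_subset _ _).trans hSM
    obtain ⟨T, hT, hTk, hpat⟩ := pair_clique (fun e => vtx 3 e 1) (fun e => vtx 3 e 2)
      (S.filter fun e => c < vtx 3 e 1) (fun e he => (hm e (hsub he)).2)
      (vtx_injOn hM.1 hsub 1) (vtx_injOn hM.1 hsub 2)
      (fun e he f hf => hne 1 2 (by decide) e (hsub he) f (hsub hf)) k hp
    have hTM := hT.trans hsub
    have hvT : ∀ e ∈ T, vtx 3 e 0 ≤ c ∧ c < vtx 3 e 1 ∧ vtx 3 e 1 < vtx 3 e 2 := fun e he =>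
      ⟨(hv e (Finset.mem_filter.1 (hT he)).1).1, (Finset.mem_filter.1 (hT he)).2,
        (hm e (hTM he)).2⟩
    refine hasTwins_permTau hM.1 hTM hTk (fun e => vtx 3 e 0) (fun e => vtx 3 e 1)
      (vtx_injOn hM.1 hTM _) (vtx_injOn hM.1 hTM _) ?_
    intro e he f hf e' he' f' hf' hef hef' h1 h2 i j
    obtain ⟨p1, p2, p3⟩ := hpat e he f hf e' he' f' hf' hef hef' h2
    have a1 := hvT e he
    have a2 := hvT f hf
    have a3 := hvT e' he'
    have a4 := hvT f' hf'
    fin_cases i <;> fin_cases j <;> simp <;> omega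
  · have hsub : (S.filter fun e => ¬ c < vtx 3 e 1) ⊆ M := (Finset.filter_subset _ _).trans hSM
    obtain ⟨T, hT, hTk, hpat⟩ := pair_clique (fun e => vtx 3 e 0) (fun e => vtx 3 e 1)
      (S.filter fun e => ¬ c < vtx 3 e 1) (fun e he => (hm e (hsub he)).1)
      (vtx_injOn hM.1 hsub 0) (vtx_injOn hM.1 hsub 1)
      (fun e he f hf => hne 0 1 (by decide) e (hsub he) f (hsub hf)) k hp
    have hTM := hT.trans hsub
    have hvT : ∀ e ∈ T, vtx 3 e 0 < vtx 3 e 1 ∧ ¬ c < vtx 3 e 1 ∧ c < vtx 3 e 2 := fun e he =>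
      ⟨(hm e (hTM he)).1, (Finset.mem_filter.1 (hT he)).2,
        (hv e (Finset.mem_filter.1 (hT he)).1).2⟩
    refine hasTwins_permTau hM.1 hTM hTk (fun e => vtx 3 e 2) (fun e => vtx 3 e 0)
      (vtx_injOn hM.1 hTM _) (vtx_injOn hM.1 hTM _) ?_
    intro e he f hf e' he' f' hf' hef hef' h1 h2 i j
    obtain ⟨p1, p2, p3⟩ := hpat e he f hf e' he' f' hf' hef hef' h2
    have a1 := hvT e he
    have a2 := hvT f hf
    have a3 := hvT e' he'
    have a4 := hvT f' hf'
    fin_cases i <;> fin_cases j <;> simp <;> omega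

/-! ### The case `r ≥ 4`: twins from close pairs of edges -/

lemma close_pairs {r w N : ℕ} (hw : 0 < w) : ∀ (j : ℕ) (S : Finset (Finset ℕ)), IsMatching r S →
    (∀ e ∈ S, ∀ x ∈ e, x < N * w) → N ^ r + j * (r * w) < S.card →
    ∃ (e f : Fin (j + 1) → Finset ℕ), (∀ a, e a ∈ S) ∧ (∀ a, f a ∈ S) ∧ (∀ a, e a ≠ f a) ∧
      (∀ a i, vtx r (e a) i / w = vtx r (f a) i / w) ∧
      (∀ a b, a ≠ b → ∀ i i', vtx r (e a) i / w ≠ vtx r (e b) i' / w) := by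
  classical
  intro j
  have pick : ∀ S : Finset (Finset ℕ), IsMatching r S →
      (∀ e ∈ S, ∀ x ∈ e, x < N * w) → N ^ r < S.card →
      ∃ e ∈ S, ∃ f ∈ S, e ≠ f ∧ ∀ i, vtx r e i / w = vtx r f i / w := by
    intro S hS hb hcard
    have := Finset.exists_ne_map_eq_of_card_lt_of_maps_to (s := S)
      (t := Fintype.piFinset fun _ : Fin r => Finset.range N)
      (f := fun e i => vtx r e i / w) (by simpa using hcard) (by
        intro e he
        simp only [Finset.mem_coe, Fintype.mem_piFinset, Finset.mem_range]
        intro i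
        rw [Nat.div_lt_iff_lt_mul hw]
        exact hb e he _ (vtx_mem (hS.1 e he) i))
    obtain ⟨e, he, f, hf, hne, heq⟩ := this
    exact ⟨e, he, f, hf, hne, fun i => congrFun heq i⟩
  induction j with
  | zero =>
    intro S hS hb hcard
    obtain ⟨e, he, f, hf, hne, heq⟩ := pick S hS hb (by omega)
    refine ⟨fun _ => e, fun _ => f, fun _ => he, fun _ => hf, fun _ => hne, fun _ => heq, ?_⟩
    intro a b hab
    exact absurd (Fin.ext (by omega)) hab
  | succ j ih =>
    intro S hS hb hcard
    obtain ⟨e, he, f, hf, hne, heq⟩ := pick S hS hb (by omega)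
    let K := S.filter fun g => ∃ i i', vtx r g i / w = vtx r e i' / w
    have hK : K.card ≤ r * w := by
      -- vertices in the intervals used by `e`
      let V : Finset ℕ := Finset.univ.biUnion fun i' : Fin r =>
        Finset.Ico (vtx r e i' / w * w) (vtx r e i' / w * w + w)
      have hV : V.card ≤ r * w := by
        refine Finset.card_biUnion_le.trans ?_
        simp
      refine le_trans ?_ hV
      have hch : ∀ g : Finset ℕ, ∃ x, g ∈ K → x ∈ g ∧ x ∈ V := by
        intro g
        by_cases hg : g ∈ K
        · obtain ⟨hgS, i, i', hii⟩ := Finset.mem_filter.1 hg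
          refine ⟨vtx r g i, fun _ => ⟨vtx_mem (hS.1 g hgS) i, ?_⟩⟩
          rw [Finset.mem_biUnion]
          refine ⟨i', Finset.mem_univ _, ?_⟩
          rw [Finset.mem_Ico, ← hii]
          have h1 := Nat.div_add_mod (vtx r g i) w
          have h2 := Nat.mod_lt (vtx r g i) hw
          rw [mul_comm] at h1
          omega
        · exact ⟨0, fun h => absurd h hg⟩
      choose x hx using hch
      apply Finset.card_le_card_of_injOn x
      · intro g hg
        exact (hx g hg).2
      · intro g hg g' hg' hxx
        by_contra hgg
        refine Finset.disjoint_left.1 (hS.2 g (Finset.mem_filter.1 hg).1 g'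
          (Finset.mem_filter.1 hg').1 hgg) (hx g hg).1 ?_
        rw [hxx]
        exact (hx g' hg').1
    have hcard' : N ^ r + j * (r * w) < (S \ K).card := by
      have := Finset.le_card_sdiff K S
      rw [add_mul, one_mul] at hcard
      omega
    have hsub : S \ K ⊆ S := Finset.sdiff_subset
    obtain ⟨E, F, hE, hF, hEF, hEFw, hEE⟩ := ih (S \ K)
      ⟨fun e he => hS.1 e (hsub he), fun e he f hf => hS.2 e (hsub he) f (hsub hf)⟩
      (fun e he => hb e (hsub he)) hcard'
    have hKn : ∀ a i i', vtx r (E a) i / w ≠ vtx r e i' / w := by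
      intro a i i' h
      exact (Finset.mem_sdiff.1 (hE a)).2 (Finset.mem_filter.2 ⟨hsub (hE a), i, i', h⟩)
    refine ⟨Fin.cons e E, Fin.cons f F, ?_, ?_, ?_, ?_, ?_⟩
    · intro a
      refine Fin.cases ?_ (fun a => ?_) a
      · exact he
      · exact hsub (hE a)
    · intro a
      refine Fin.cases ?_ (fun a => ?_) a
      · exact hf
      · exact hsub (hF a)
    · intro a
      refine Fin.cases ?_ (fun a => ?_) a
      · exact hne
      · exact hEF a
    · intro a
      refine Fin.cases ?_ (fun a => ?_) a
      · exact heq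
      · exact hEFw a
    · intro a b
      refine Fin.cases ?_ (fun a => ?_) a <;> refine Fin.cases ?_ (fun b => ?_) b
      · intro h; exact absurd rfl h
      · intro _ i i' h
        simp only [Fin.cons_zero, Fin.cons_succ] at h
        exact hKn b i' i h.symm
      · intro _ i i' h
        simp only [Fin.cons_zero, Fin.cons_succ] at h
        exact hKn a i i' h
      · intro hab i i'
        simp only [Fin.cons_succ]
        exact hEE a b (fun h => hab (by rw [h])) i i'

lemma hasTwins_close {r w N : ℕ} (hr : 1 ≤ r) (hw : 0 < w) (j : ℕ) {S : Finset (Finset ℕ)}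
    (hS : IsMatching r S) (hb : ∀ e ∈ S, ∀ x ∈ e, x < N * w)
    (hc : N ^ r + j * (r * w) < S.card) : HasTwins S (j + 1) := by
  obtain ⟨e, f, he, hf, hne, hw', hdis⟩ := close_pairs hw j S hS hb hc
  have hlt : ∀ x y : ℕ, x / w ≠ y / w → (x < y ↔ x / w < y / w) := by
    intro x y hxy
    constructor
    · intro h
      exact lt_of_le_of_ne (Nat.div_le_div_right h.le) hxy
    · intro h
      by_contra hcon
      exact absurd (Nat.div_le_div_right (c := w) (not_lt.1 hcon)) (not_le.2 h)
  have key : TwinFam r S e f := by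
    refine ⟨he, hf, ?_, ?_, ?_⟩
    · intro a b hab
      by_cases h : a = b
      · subst h
        exact hne a hab
      · apply hdis a b h ⟨0, hr⟩ ⟨0, hr⟩
        rw [hab, hw']
    · intro a b hab
      by_contra h
      apply hdis a b h ⟨0, hr⟩ ⟨0, hr⟩
      rw [hab]
    · intro a b i i'
      by_cases h : a = b
      · subst h
        rw [(vtx_strictMono (hS.1 _ (he a))).lt_iff_lt, (vtx_strictMono (hS.1 _ (hf a))).lt_iff_lt]
      · have h1 := hdis a b h i i'
        have h2 := h1
        rw [hw', hw'] at h2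
        rw [hlt _ _ h1, hlt _ _ h2, hw', hw']
  have := key.hasTwins hS
  rwa [Fintype.card_fin] at this

lemma hasTwins_large {r n q : ℕ} (hr : 1 ≤ r) (hq : 1 ≤ q) {M : Finset (Finset ℕ)}
    (hM : IsOrderedMatching r n M) (hn : 2 * (2 * r ^ 2 * q) ^ r < n)
    (hn2 : 2 * r * q ^ 2 ≤ n) : HasTwins M q := by
  obtain ⟨j, rfl⟩ : ∃ j, q = j + 1 := ⟨q - 1, by omega⟩
  let N := 2 * r ^ 2 * (j + 1)
  let w := r * n / N + 1
  have hN : 0 < N := by positivity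
  have hdm := Nat.div_add_mod (r * n) N
  have hml := Nat.mod_lt (r * n) hN
  apply hasTwins_close (N := N) (w := w) hr (Nat.succ_pos _) j hM.1
  · intro e he x hx
    have : x ∈ mSupport M := mem_mSupport.2 ⟨e, he, hx⟩
    rw [hM.2.2, Finset.mem_Icc] at this
    have h3 : N * w = N * (r * n / N) + N := by simp [w, mul_add]
    omega
  · rw [hM.2.1]
    have hle : N * (r * n / N) ≤ r * n := by omega
    -- `2 r (j+1) (r n / N) ≤ n`
    have h4 : 2 * r * (j + 1) * (r * n / N) ≤ n := by
      have : r * (2 * r * (j + 1) * (r * n / N)) ≤ r * n := by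
        calc r * (2 * r * (j + 1) * (r * n / N)) = N * (r * n / N) := by simp only [N]; ring
          _ ≤ r * n := hle
      exact Nat.le_of_mul_le_mul_left this (by omega)
    have hNn : 2 * N ^ r < n := hn
    have h5 : (j + 1) * (2 * (j * (r * w))) ≤ (j + 1) * n := by
      have e1 : (j + 1) * (2 * (j * (r * w))) =
          j * (2 * r * (j + 1) * (r * n / N)) + 2 * r * j * (j + 1) := by
        simp only [w]; ring
      have e2 : j * (2 * r * (j + 1) * (r * n / N)) ≤ j * n := Nat.mul_le_mul_left _ h4
      have e3 : 2 * r * j * (j + 1) ≤ n := by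
        refine le_trans ?_ hn2
        have : j * (j + 1) ≤ (j + 1) ^ 2 := by nlinarith
        calc 2 * r * j * (j + 1) = 2 * r * (j * (j + 1)) := by ring
          _ ≤ 2 * r * (j + 1) ^ 2 := Nat.mul_le_mul_left _ this
      rw [e1, add_mul, one_mul]
      omega
    have h6 := Nat.le_of_mul_le_mul_left h5 (Nat.succ_pos j)
    omega

/-! ### Numerical estimates -/

lemma two_pow_bound {r : ℕ} (hr : 5 ≤ r) : r * (r + 1) + 2 ≤ 2 ^ r := by
  induction r, hr using Nat.le_induction with
  | base => norm_num
  | succ r hr ih =>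
    rw [pow_succ]
    nlinarith

lemma sq_le_two_pow {r : ℕ} (hr : 4 ≤ r) : r ^ 2 ≤ 2 ^ r := by
  induction r, hr using Nat.le_induction with
  | base => norm_num
  | succ r hr ih =>
    rw [pow_succ 2]
    nlinarith

lemma numeric {r n q : ℕ} (hr : 4 ≤ r) (hq : 2 ≤ q)
    (hn : 6 * r * (4 * q) ^ (2 ^ (r - 1) - 1) ≤ n) :
    2 * (2 * r ^ 2 * q) ^ r < n ∧ 2 * r * q ^ 2 ≤ n := by
  have hmain : 2 * (2 * r ^ 2 * q) ^ r < n := by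
    refine lt_of_lt_of_le ?_ hn
    rcases Nat.lt_or_ge r 5 with h | h
    · have : r = 4 := by omega
      subst this
      norm_num
      have e1 : 2 * (2 * 16 * q) ^ 4 = 2097152 * q ^ 4 := by ring
      have e2 : 24 * (4 * q) ^ 7 = 393216 * q ^ 3 * q ^ 4 := by ring
      have e3 : 2 ^ 3 ≤ q ^ 3 := Nat.pow_le_pow_left hq 3
      have e4 : 0 < q ^ 4 := by positivity
      calc 2 * (2 * 16 * q) ^ 4 = 2097152 * q ^ 4 := by ring
        _ < 393216 * q ^ 3 * q ^ 4 := Nat.mul_lt_mul_of_pos_right (by omega) e4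
        _ = 24 * (4 * q) ^ 7 := by ring
    · obtain ⟨s, rfl⟩ : ∃ s, r = s + 1 := ⟨r - 1, by omega⟩
      simp only [Nat.add_sub_cancel]
      have hb := two_pow_bound h
      have hs := sq_le_two_pow hr
      have h2 : 2 ^ (s + 1) = 2 * 2 ^ s := by rw [pow_succ]; ring
      have f1 : (2 * (s + 1) ^ 2) ^ (s + 1) ≤ 4 ^ (2 ^ s - 1) := by
        calc (2 * (s + 1) ^ 2) ^ (s + 1) ≤ (2 ^ (s + 2)) ^ (s + 1) := by
              apply Nat.pow_le_pow_left
              have : 2 ^ (s + 2) = 2 * 2 ^ (s + 1) := by rw [pow_succ 2 (s + 1)]; ring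
              omega
          _ = 2 ^ ((s + 1) * (s + 1 + 1)) := by rw [← pow_mul]; ring_nf
          _ ≤ 2 ^ (2 * (2 ^ s - 1)) := Nat.pow_le_pow_right (by norm_num) (by omega)
          _ = 4 ^ (2 ^ s - 1) := by rw [pow_mul]; norm_num
      have hle : s + 1 ≤ 2 ^ s - 1 := by
        have : 5 * (s + 1 + 1) ≤ (s + 1) * (s + 1 + 1) := Nat.mul_le_mul_right _ h
        omega
      have f2 : q ^ (s + 1) ≤ q ^ (2 ^ s - 1) := Nat.pow_le_pow_right (by omega) hle
      have f3 : (2 * (s + 1) ^ 2 * q) ^ (s + 1) ≤ (4 * q) ^ (2 ^ s - 1) := by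
        rw [mul_pow (2 * (s + 1) ^ 2) q, mul_pow 4 q]
        exact Nat.mul_le_mul f1 f2
      have f4 : 0 < (4 * q) ^ (2 ^ s - 1) := by positivity
      calc 2 * (2 * (s + 1) ^ 2 * q) ^ (s + 1) ≤ 2 * (4 * q) ^ (2 ^ s - 1) :=
            Nat.mul_le_mul_left _ f3
        _ < 6 * (s + 1) * (4 * q) ^ (2 ^ s - 1) := Nat.mul_lt_mul_of_pos_right (by omega) f4
  refine ⟨hmain, ?_⟩
  have g1 : (2 * r ^ 2 * q) ^ 2 ≤ (2 * r ^ 2 * q) ^ r :=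
    Nat.pow_le_pow_right (by positivity) (by omega)
  have g2 : 2 * r * q ^ 2 ≤ (2 * r ^ 2 * q) ^ 2 := by
    calc 2 * r * q ^ 2 ≤ 2 * r * q ^ 2 * (2 * r ^ 3) := Nat.le_mul_of_pos_right _ (by positivity)
      _ = (2 * r ^ 2 * q) ^ 2 := by ring
  omega

/-- Any matching with at least two edges has twins of size one. -/
lemma hasTwins_one {r : ℕ} {M : Finset (Finset ℕ)} (hM : IsMatching r M)
    (h : 2 ≤ M.card) : HasTwins M 1 := by
  obtain ⟨e, he, f, hf, hne⟩ := Finset.one_lt_card.1 (show 1 < M.card by omega)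
  have key : TwinFam r M (fun _ : Fin 1 => e) (fun _ : Fin 1 => f) := by
    refine ⟨fun _ => he, fun _ => hf, fun _ _ => hne, fun a b _ => Subsingleton.elim a b, ?_⟩
    intro _ _ i j
    rw [(vtx_strictMono (hM.1 _ he)).lt_iff_lt, (vtx_strictMono (hM.1 _ hf)).lt_iff_lt]
  have := key.hasTwins hM
  rwa [Fintype.card_fin] at this

lemma floor_rpow_bound {a x : ℝ} (hx : 0 ≤ x) (ha : 0 ≤ a) {d : ℕ} (hd : d ≠ 0)
    {k : ℕ} (hk : (k : ℝ) ≤ a * x ^ ((1 : ℝ) / d)) : (k : ℝ) ^ d ≤ a ^ d * x := by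
  calc (k : ℝ) ^ d ≤ (a * x ^ ((1 : ℝ) / d)) ^ d := pow_le_pow_left₀ (by positivity) hk d
    _ = a ^ d * x := by
      rw [mul_pow, ← Real.rpow_natCast (x ^ _), ← Real.rpow_mul hx]
      have : (1 : ℝ) / d * d = 1 := by
        have : (d : ℝ) ≠ 0 := by exact_mod_cast hd
        field_simp
      rw [this, Real.rpow_one]

lemma case_four {r n : ℕ} (hr : 4 ≤ r) {M : Finset (Finset ℕ)} (hM : IsOrderedMatching r n M) :
    permTau ⌊ell (r - 1) ((n : ℝ) / (6 * r))⌋₊ ≤ twinMax M := by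
  set K := ⌊ell (r - 1) ((n : ℝ) / (6 * r))⌋₊ with hK
  set q := permTau K with hq
  have hqK : 2 * q ≤ K := two_mul_permTau_le K
  rcases Nat.eq_zero_or_pos q with h0 | h0
  · omega
  have hd1 : 2 ≤ 2 ^ (r - 1) := by
    calc 2 = 2 ^ 1 := rfl
      _ ≤ 2 ^ (r - 1) := Nat.pow_le_pow_right (by norm_num) (by omega)
  have hx : (0 : ℝ) ≤ (n : ℝ) / (6 * r) := by positivity
  have hle : (K : ℝ) ≤ ell (r - 1) ((n : ℝ) / (6 * r)) := Nat.floor_le (by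
    unfold ell; split_ifs <;> positivity)
  have hell : ell (r - 1) ((n : ℝ) / (6 * r)) =
      (1 / 2) * ((n : ℝ) / (6 * r)) ^ ((1 : ℝ) / ((2 ^ (r - 1) - 1 : ℕ) : ℝ)) := by
    unfold ell
    rw [if_neg (by omega), Nat.cast_sub (by omega)]
    push_cast
    rfl
  rw [hell] at hle
  have h1 := floor_rpow_bound hx (by norm_num) (by omega) hle
  have h2 : (2 * (K : ℝ)) ^ (2 ^ (r - 1) - 1) ≤ (n : ℝ) / (6 * r) := by
    rw [mul_pow]
    calc (2 : ℝ) ^ (2 ^ (r - 1) - 1) * (K : ℝ) ^ (2 ^ (r - 1) - 1)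
        ≤ 2 ^ (2 ^ (r - 1) - 1) * ((1 / 2) ^ (2 ^ (r - 1) - 1) * ((n : ℝ) / (6 * r))) :=
          mul_le_mul_of_nonneg_left h1 (by positivity)
      _ = (n : ℝ) / (6 * r) := by
        rw [← mul_assoc, ← mul_pow]
        norm_num
  have hrpos : (0 : ℝ) < 6 * r := by
    have : (0 : ℝ) < r := by exact_mod_cast (by omega : 0 < r)
    positivity
  rw [le_div_iff₀ hrpos] at h2
  have h3 : (2 * K) ^ (2 ^ (r - 1) - 1) * (6 * r) ≤ n := by exact_mod_cast h2
  have h4 : 6 * r * (4 * q) ^ (2 ^ (r - 1) - 1) ≤ n := by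
    refine le_trans ?_ h3
    rw [mul_comm]
    exact Nat.mul_le_mul_right _ (Nat.pow_le_pow_left (by omega) _)
  apply le_twinMax
  rcases Nat.lt_or_ge q 2 with h5 | h5
  · have : q = 1 := by omega
    rw [this]
    apply hasTwins_one hM.1
    rw [hM.2.1]
    refine le_trans ?_ h4
    have : 0 < (4 * q) ^ (2 ^ (r - 1) - 1) := by positivity
    nlinarith
  · obtain ⟨h6, h7⟩ := numeric hr h5 h4
    exact hasTwins_large (by omega) (by omega) hM h6 h7

/-- Lemma 3.2, `double_ind`. For all `n ≥ 1` and `r ≥ 2`,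
`t^(r)(n) ≥ min{t₀, t₁, t₂}` where `t₀ = 2·t^(r)(⌊n/3⌋)`,
`t₁ = τ(⌊ℓ_{r-1}(n/(6r))⌋)`, and
`t₂ = min_{2 ≤ p ≤ r-2} max{t^{(r-p)}(⌊ℓ_p(n/(6r))⌋), t^{(p)}(⌊ℓ_{r-p}(n/(6r))⌋)}`,
with `t₂ = n` when the range `2 ≤ p ≤ r-2` is empty (i.e. for `r ≤ 3`). -/
theorem main_lemma_double_recurrence (r n : ℕ) (hr : 2 ≤ r) (hn : 1 ≤ n) :
    min (min (2 * minTwins r (n / 3))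
             (permTau ⌊ell (r - 1) ((n : ℝ) / (6 * r))⌋₊))
        (if 4 ≤ r then
          sInf {v : ℕ | ∃ p : ℕ, 2 ≤ p ∧ p ≤ r - 2 ∧
            v = max (minTwins (r - p) ⌊ell p ((n : ℝ) / (6 * r))⌋₊)
                    (minTwins p ⌊ell (r - p) ((n : ℝ) / (6 * r))⌋₊)}
        else n)
      ≤ minTwins r n := by
  obtain ⟨M, hM, hMt⟩ : ∃ M, IsOrderedMatching r n M ∧ twinMax M = minTwins r n := by
    obtain ⟨M, hM⟩ := exists_orderedMatching r n (by omega)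
    exact Nat.sInf_mem (s := {t | ∃ M, IsOrderedMatching r n M ∧ twinMax M = t}) ⟨_, M, hM, rfl⟩
  rw [← hMt]
  refine le_trans (min_le_left _ _) ?_
  rw [min_le_iff]
  rcases Nat.lt_or_ge r 4 with h | h
  · rcases (by omega : r = 2 ∨ r = 3) with rfl | rfl
    · apply case_two hM
      have hle : ((⌊ell (2 - 1) ((n : ℝ) / (6 * (2 : ℕ)))⌋₊ : ℕ) : ℝ) ≤
          ell (2 - 1) ((n : ℝ) / (6 * (2 : ℕ))) :=
        Nat.floor_le (by unfold ell; split_ifs <;> positivity)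
      have hell : ell (2 - 1) ((n : ℝ) / (6 * (2 : ℕ))) = (n : ℝ) / 24 := by
        unfold ell
        norm_num
        ring
      rw [hell] at hle ⊢
      have : (3 : ℝ) * (⌊(n : ℝ) / 24⌋₊ : ℕ) ≤ n := by
        have : (0 : ℝ) ≤ n := by positivity
        linarith
      exact_mod_cast this
    · apply case_three hM
      have hle : ((⌊ell (3 - 1) ((n : ℝ) / (6 * (3 : ℕ)))⌋₊ : ℕ) : ℝ) ≤
          ell (3 - 1) ((n : ℝ) / (6 * (3 : ℕ))) :=
        Nat.floor_le (by unfold ell; split_ifs <;> positivity)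
      generalize ⌊ell (3 - 1) ((n : ℝ) / (6 * (3 : ℕ)))⌋₊ = k at hle ⊢
      have hell : ell (3 - 1) ((n : ℝ) / (6 * (3 : ℕ))) =
          1 * ((n : ℝ) / 18) ^ ((1 : ℝ) / (3 : ℕ)) := by
        unfold ell
        norm_num
      rw [hell] at hle
      have h3 := floor_rpow_bound (by positivity) (by norm_num) (by norm_num) hle
      have : (6 : ℝ) * (k : ℝ) ^ 3 ≤ n := by
        have : (0 : ℝ) ≤ n := by positivity
        linarith
      exact_mod_cast this
  · right
    exact case_four h hM
end

section
/- For all integers r ≥ 2 and n ≥ 1, L_r(n) ≥ (1/2)·n^{1/(2^r − 1)}; that is, every ordered r-matching of size n contains, for some r-pattern P, a P-clique of size at least (1/2)·n^{1/(2^r − 1)}. -/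
namespace ESM

/-- number of cuts before `x`, i.e. index of the block of `x` -/
def blk (S : Finset ℕ) (x : ℕ) : ℕ := (S.filter (· < x)).card

def sgn (S T : Finset ℕ) (x : ℕ) : Prop := blk S x = 0 ∨ blk S x - 1 ∈ T

def Rel (r : ℕ) (v : Finset ℕ → ℕ → ℕ) (S T : Finset ℕ) (e f : Finset ℕ) : Prop :=
  ∀ x < r, ∀ y < r, blk S x = blk S y →
    (sgn S T x → v e x < v f y) ∧ (¬ sgn S T x → v f y < v e x)

def Cuts (v : Finset ℕ → ℕ → ℕ) (S : Finset ℕ) (F : Finset (Finset ℕ)) : Prop :=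
  ∀ s ∈ S, ∀ e ∈ F, ∀ f ∈ F, v e s < v f (s + 1)

structure Good (r : ℕ) (v : Finset ℕ → ℕ → ℕ) (M : Finset (Finset ℕ)) : Prop where
  mono : ∀ e ∈ M, ∀ x y, x < y → y < r → v e x < v e y
  disj : ∀ e ∈ M, ∀ f ∈ M, e ≠ f → ∀ x < r, ∀ y < r, v e x ≠ v f y
  im : ∀ e ∈ M, e = (Finset.range r).image (v e)

lemma blk_mono (S : Finset ℕ) {x y : ℕ} (h : x ≤ y) : blk S x ≤ blk S y := by
  apply Finset.card_le_card
  intro s hs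
  simp only [Finset.mem_filter] at hs ⊢
  exact ⟨hs.1, by omega⟩

lemma blk_zero (S : Finset ℕ) : blk S 0 = 0 := by simp [blk]

lemma blk_succ_of_notMem (S : Finset ℕ) {x : ℕ} (h : x ∉ S) : blk S (x + 1) = blk S x := by
  unfold blk
  congr 1
  ext s
  simp only [Finset.mem_filter]
  constructor
  · rintro ⟨hs, h1⟩
    refine ⟨hs, ?_⟩
    rcases Nat.lt_succ_iff_lt_or_eq.1 h1 with h2 | h2
    · exact h2
    · subst h2; exact absurd hs h
  · rintro ⟨hs, h1⟩
    exact ⟨hs, by omega⟩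

lemma blk_succ_of_mem (S : Finset ℕ) {x : ℕ} (h : x ∈ S) : blk S x < blk S (x + 1) := by
  apply Finset.card_lt_card
  refine ⟨?_, ?_⟩
  · intro s hs
    simp only [Finset.mem_filter] at hs ⊢
    exact ⟨hs.1, by omega⟩
  · intro hh
    have : x ∈ S.filter (· < x + 1) := by simp [h]
    have := hh this
    simp at this

lemma exists_cut (S : Finset ℕ) {x y : ℕ} (h : blk S x < blk S y) : ∃ s ∈ S, x ≤ s ∧ s < y := by
  by_contra hc
  push Not at hc
  have : blk S y ≤ blk S x := by
    apply Finset.card_le_card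
    intro s hs
    simp only [Finset.mem_filter] at hs ⊢
    refine ⟨hs.1, ?_⟩
    by_contra h2
    have := hc s hs.1 (by omega)
    omega
  omega

lemma blk_le (S : Finset ℕ) (x : ℕ) : blk S x ≤ S.card := Finset.card_filter_le _ _

section order
variable {r : ℕ} {v : Finset ℕ → ℕ → ℕ} {M : Finset (Finset ℕ)}

lemma Good.le (hG : Good r v M) {e : Finset ℕ} (he : e ∈ M) {x y : ℕ} (h : x ≤ y) (hy : y < r) :
    v e x ≤ v e y := by
  rcases h.eq_or_lt with h | h
  · rw [h]
  · exact (hG.mono e he x y h hy).le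

lemma Good.le_iff (hG : Good r v M) {e : Finset ℕ} (he : e ∈ M) {x y : ℕ} (hx : x < r)
    (hy : y < r) : v e x ≤ v e y ↔ x ≤ y := by
  constructor
  · intro h
    by_contra h2
    have := hG.mono e he y x (by omega) hx
    omega
  · intro h; exact hG.le he h hy

lemma Rel.lt_iff (hG : Good r v M) {S T : Finset ℕ} {F : Finset (Finset ℕ)} (hFM : F ⊆ M)
    (hS : Cuts v S F) {e f : Finset ℕ} (he : e ∈ F) (hf : f ∈ F) (h : Rel r v S T e f)
    {x y : ℕ} (hx : x < r) (hy : y < r) :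
    v e x < v f y ↔ (blk S x < blk S y ∨ (blk S x = blk S y ∧ sgn S T x)) := by
  rcases lt_trichotomy (blk S x) (blk S y) with hb | hb | hb
  · obtain ⟨s, hs, h1, h2⟩ := exists_cut S hb
    have a1 := hG.le (hFM he) h1 (by omega)
    have a2 := hS s hs e he f hf
    have a3 := hG.le (hFM hf) (show s + 1 ≤ y by omega) hy
    simp only [hb, true_or, iff_true]
    omega
  · have := h x hx y hy hb
    by_cases hs : sgn S T x
    · simp [hb, hs, this.1 hs]
    · have := this.2 hs
      simp only [hb, hs, lt_irrefl, and_false, or_false, iff_false]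
      omega
  · obtain ⟨s, hs, h1, h2⟩ := exists_cut S hb
    have a1 := hG.le (hFM hf) h1 (by omega)
    have a2 := hS s hs f hf e he
    have a3 := hG.le (hFM he) (show s + 1 ≤ x by omega) hx
    constructor
    · intro; omega
    · rintro (h | h) <;> omega

lemma Rel.trans {S T : Finset ℕ} {e f g : Finset ℕ} (h1 : Rel r v S T e f)
    (h2 : Rel r v S T f g) : Rel r v S T e g := by
  intro x hx y hy hb
  have a := h1 x hx x hx rfl
  have b := h2 x hx y hy hb
  exact ⟨fun h => (a.1 h).trans (b.1 h), fun h => (b.2 h).trans (a.2 h)⟩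

lemma Rel.irrefl (hr : 0 < r) {S T : Finset ℕ} (e : Finset ℕ) : ¬ Rel r v S T e e := by
  intro h
  have := (h 0 hr 0 hr rfl).1 (Or.inl (blk_zero S))
  omega
end order

/-! ### Ranks and patterns -/

def rk (s : Finset ℕ) (x : ℕ) : ℕ := (s.filter (· ≤ x)).card

lemma rk_lt (s : Finset ℕ) {x y : ℕ} (hy : y ∈ s) (h : x < y) : rk s x < rk s y := by
  apply Finset.card_lt_card
  refine ⟨?_, ?_⟩
  · intro z hz
    simp only [Finset.mem_filter] at hz ⊢
    exact ⟨hz.1, by omega⟩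
  · intro hh
    have : y ∈ s.filter (· ≤ y) := by simp [hy]
    have := hh this
    simp only [Finset.mem_filter] at this
    omega

lemma rk_injOn (s : Finset ℕ) : Set.InjOn (rk s) s := by
  intro x hx y hy h
  rcases lt_trichotomy x y with h1 | h1 | h1
  · have := rk_lt s hy h1; omega
  · exact h1
  · have := rk_lt s hx h1; omega

lemma rk_image (s : Finset ℕ) : s.image (rk s) = Finset.Icc 1 s.card := by
  apply Finset.eq_of_subset_of_card_le
  · intro z hz
    obtain ⟨x, hx, rfl⟩ := Finset.mem_image.1 hz
    rw [Finset.mem_Icc]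
    refine ⟨?_, Finset.card_filter_le _ _⟩
    apply Finset.card_pos.2
    exact ⟨x, by simp [hx]⟩
  · rw [Finset.card_image_of_injOn (rk_injOn s)]
    simp

lemma mSupport_pair (e f : Finset ℕ) : mSupport {e, f} = e ∪ f := by
  simp [mSupport]

def nrm (e f : Finset ℕ) : Finset (Finset ℕ) :=
  {e.image (rk (e ∪ f)), f.image (rk (e ∪ f))}

lemma nrm_comm (e f : Finset ℕ) : nrm e f = nrm f e := by
  unfold nrm
  rw [Finset.pair_comm, Finset.union_comm]

lemma nrm_matchIso (e f : Finset ℕ) : MatchIso {e, f} (nrm e f) := by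
  refine ⟨rk (e ∪ f), ?_, ?_, ?_⟩
  · rw [mSupport_pair, nrm, mSupport_pair, ← Finset.image_union, Finset.coe_image]
    exact (rk_injOn _).bijOn_image
  · rw [mSupport_pair]
    intro x _ y hy h
    exact rk_lt _ hy h
  · simp [nrm, Finset.image_insert]

lemma nrm_isPattern {r : ℕ} (hr : 0 < r) {e f : Finset ℕ} (he : e.card = r) (hf : f.card = r)
    (hd : Disjoint e f) : IsPattern r (nrm e f) := by
  have hinj := rk_injOn (e ∪ f)
  have hce : (e.image (rk (e ∪ f))).card = r := by
    rw [Finset.card_image_of_injOn (hinj.mono (by simp)), he]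
  have hcf : (f.image (rk (e ∪ f))).card = r := by
    rw [Finset.card_image_of_injOn (hinj.mono (by simp)), hf]
  have hdis : Disjoint (e.image (rk (e ∪ f))) (f.image (rk (e ∪ f))) := by
    rw [Finset.disjoint_left]
    intro z hz hz'
    obtain ⟨x, hx, rfl⟩ := Finset.mem_image.1 hz
    obtain ⟨y, hy, hxy⟩ := Finset.mem_image.1 hz'
    have : y = x := hinj (by simp [hy]) (by simp [hx]) hxy
    subst this
    exact (Finset.disjoint_left.1 hd) hx hy
  have hne : e.image (rk (e ∪ f)) ≠ f.image (rk (e ∪ f)) := by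
    intro h
    rw [← h, disjoint_self] at hdis
    rw [hdis] at hce
    simp at hce
    omega
  refine ⟨⟨?_, ?_⟩, ?_, ?_⟩
  · intro a ha
    simp only [nrm, Finset.mem_insert, Finset.mem_singleton] at ha
    rcases ha with rfl | rfl <;> assumption
  · intro a ha b hb hab
    simp only [nrm, Finset.mem_insert, Finset.mem_singleton] at ha hb
    rcases ha with rfl | rfl <;> rcases hb with rfl | rfl
    · exact absurd rfl hab
    · exact hdis
    · exact hdis.symm
    · exact absurd rfl hab
  · exact Finset.card_pair hne
  · rw [nrm, mSupport_pair, ← Finset.image_union, rk_image, Finset.card_union_of_disjoint hd, he, hf]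
    congr 1
    ring

section pat
variable {r : ℕ} {v : Finset ℕ → ℕ → ℕ} {M : Finset (Finset ℕ)}

lemma Good.injOn (hG : Good r v M) {e : Finset ℕ} (he : e ∈ M) :
    Set.InjOn (v e) (Finset.range r : Set ℕ) := by
  intro x hx y hy h
  simp only [Finset.coe_range, Set.mem_Iio] at hx hy
  have h1 := (hG.le_iff he hx hy).1 h.le
  have h2 := (hG.le_iff he hy hx).1 h.ge
  omega

lemma Good.card (hG : Good r v M) {e : Finset ℕ} (he : e ∈ M) : e.card = r := by
  rw [hG.im e he, Finset.card_image_of_injOn (hG.injOn he), Finset.card_range]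

lemma Good.disjoint (hG : Good r v M) {e f : Finset ℕ} (he : e ∈ M) (hf : f ∈ M) (h : e ≠ f) :
    Disjoint e f := by
  rw [Finset.disjoint_left, hG.im e he, hG.im f hf]
  intro z hz hz'
  obtain ⟨x, hx, rfl⟩ := Finset.mem_image.1 hz
  obtain ⟨y, hy, hxy⟩ := Finset.mem_image.1 hz'
  exact hG.disj e he f hf h x (Finset.mem_range.1 hx) y (Finset.mem_range.1 hy) hxy.symm

lemma Good.card_filter (hG : Good r v M) {e : Finset ℕ} (he : e ∈ M) (z : ℕ) :
    (e.filter (· ≤ z)).card = ((Finset.range r).filter (fun y => v e y ≤ z)).card := by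
  conv_lhs => rw [hG.im e he]
  rw [Finset.filter_image, Finset.card_image_of_injOn]
  exact (hG.injOn he).mono (by intro x hx; simp at hx ⊢; exact hx.1)

lemma Good.rk_eq (hG : Good r v M) {e f : Finset ℕ} (he : e ∈ M) (hf : f ∈ M) (h : e ≠ f)
    (z : ℕ) : rk (e ∪ f) z = ((Finset.range r).filter (fun y => v e y ≤ z)).card +
      ((Finset.range r).filter (fun y => v f y ≤ z)).card := by
  rw [rk, Finset.filter_union, Finset.card_union_of_disjoint, hG.card_filter he, hG.card_filter hf]
  exact Finset.disjoint_filter_filter (hG.disjoint he hf h)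

lemma Good.image_eq (hG : Good r v M) {e : Finset ℕ} (he : e ∈ M) (g : ℕ → ℕ) :
    e.image g = (Finset.range r).image (fun x => g (v e x)) := by
  conv_lhs => rw [hG.im e he]
  rw [Finset.image_image]
  rfl

lemma nrm_eq (hG : Good r v M) {S T : Finset ℕ} {F : Finset (Finset ℕ)} (hFM : F ⊆ M)
    (hS : Cuts v S F) {e f e' f' : Finset ℕ} (he : e ∈ F) (hf : f ∈ F) (h : Rel r v S T e f)
    (hne : e ≠ f) (he' : e' ∈ F) (hf' : f' ∈ F) (h' : Rel r v S T e' f') (hne' : e' ≠ f') :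
    nrm e f = nrm e' f' := by
  unfold nrm
  rw [hG.image_eq (hFM he), hG.image_eq (hFM he'), hG.image_eq (hFM hf), hG.image_eq (hFM hf')]
  congr 1
  · apply Finset.image_congr
    intro x hx
    simp only [Finset.coe_range, Set.mem_Iio] at hx
    simp only
    rw [hG.rk_eq (hFM he) (hFM hf) hne, hG.rk_eq (hFM he') (hFM hf') hne']
    congr 2
    · apply Finset.filter_congr
      intro y hy
      rw [Finset.mem_range] at hy
      rw [hG.le_iff (hFM he) hy hx, hG.le_iff (hFM he') hy hx]
    · apply Finset.filter_congr
      intro y hy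
      rw [Finset.mem_range] at hy
      rw [← not_lt, ← not_lt, h.lt_iff hG hFM hS he hf hx hy, h'.lt_iff hG hFM hS he' hf' hx hy]
  · congr 1
    apply Finset.image_congr
    intro x hx
    simp only [Finset.coe_range, Set.mem_Iio] at hx
    simp only
    rw [hG.rk_eq (hFM he) (hFM hf) hne, hG.rk_eq (hFM he') (hFM hf') hne']
    congr 2
    · apply Finset.filter_congr
      intro y hy
      rw [Finset.mem_range] at hy
      rw [(hG.disj e (hFM he) f (hFM hf) hne y hy x hx).le_iff_lt,
        (hG.disj e' (hFM he') f' (hFM hf') hne' y hy x hx).le_iff_lt,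
        h.lt_iff hG hFM hS he hf hy hx, h'.lt_iff hG hFM hS he' hf' hy hx]
    · apply Finset.filter_congr
      intro y hy
      rw [Finset.mem_range] at hy
      rw [hG.le_iff (hFM hf) hy hx, hG.le_iff (hFM hf') hy hx]

lemma chain_clique (hr : 0 < r) (hG : Good r v M) {S T : Finset ℕ} {C : Finset (Finset ℕ)}
    (hCM : C ⊆ M) (hS : Cuts v S C)
    (hC : ∀ e ∈ C, ∀ f ∈ C, e ≠ f → Rel r v S T e f ∨ Rel r v S T f e) :
    ∃ P, IsPattern r P ∧ IsPClique P C := by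
  by_cases h : ∃ e ∈ C, ∃ f ∈ C, e ≠ f ∧ Rel r v S T e f
  · obtain ⟨e, he, f, hf, hne, hR⟩ := h
    refine ⟨nrm e f, nrm_isPattern hr (hG.card (hCM he)) (hG.card (hCM hf))
      (hG.disjoint (hCM he) (hCM hf) hne), ?_⟩
    intro a ha b hb hab
    rcases hC a ha b hb hab with h1 | h1
    · rw [nrm_eq hG hCM hS he hf hR hne ha hb h1 hab]
      exact nrm_matchIso a b
    · rw [nrm_eq hG hCM hS he hf hR hne hb ha h1 hab.symm, nrm_comm]
      exact nrm_matchIso a b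
  · refine ⟨nrm (Finset.range r) (Finset.Ico r (2 * r)), nrm_isPattern hr (by simp)
      (by simp; omega) ?_, ?_⟩
    · rw [Finset.disjoint_left]
      intro x hx hx'
      simp at hx hx'
      omega
    · intro a ha b hb hab
      exfalso
      apply h
      rcases hC a ha b hb hab with h1 | h1
      · exact ⟨a, ha, b, hb, hab, h1⟩
      · exact ⟨b, hb, a, ha, hab.symm, h1⟩
end pat

section comb
variable {r : ℕ} {v : Finset ℕ → ℕ → ℕ} {M : Finset (Finset ℕ)}

/-- Mirsky plus pigeonhole. -/
lemma mirsky {α : Type*} [DecidableEq α] (R : α → α → Prop) (htr : ∀ a b c, R a b → R b c → R a c)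
    (hirr : ∀ a, ¬ R a a) (F : Finset α) (L : ℕ)
    (hL : ∀ C ⊆ F, (∀ a ∈ C, ∀ b ∈ C, a ≠ b → R a b ∨ R b a) → C.card ≤ L) :
    ∃ F' ⊆ F, F.card ≤ L * F'.card ∧ ∀ a ∈ F', ∀ b ∈ F', ¬ R a b := by
  classical
  let Ch : α → Finset (Finset α) := fun e => F.powerset.filter
    (fun C => (∀ a ∈ C, ∀ b ∈ C, a ≠ b → R a b ∨ R b a) ∧ ∀ a ∈ C, R a e)
  let h : α → ℕ := fun e => (Ch e).sup Finset.card
  have hne : ∀ e, (Ch e).Nonempty := fun e => ⟨∅, by simp [Ch]⟩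
  have key : ∀ e ∈ F, ∃ D ⊆ F, (∀ a ∈ D, ∀ b ∈ D, a ≠ b → R a b ∨ R b a) ∧
      (∀ a ∈ D, a = e ∨ R a e) ∧ D.card = h e + 1 := by
    intro e he
    obtain ⟨C, hC, hc⟩ := Finset.exists_mem_eq_sup (Ch e) (hne e) Finset.card
    simp only [Ch, Finset.mem_filter, Finset.mem_powerset] at hC
    obtain ⟨hCF, hch, hR⟩ := hC
    refine ⟨insert e C, ?_, ?_, ?_, ?_⟩
    · intro x hx
      rcases Finset.mem_insert.1 hx with rfl | hx
      · exact he
      · exact hCF hx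
    · intro a ha b hb hab
      rcases Finset.mem_insert.1 ha with h1 | h1 <;> rcases Finset.mem_insert.1 hb with h2 | h2
      · exact absurd (h1.trans h2.symm) hab
      · exact Or.inr (h1 ▸ hR b h2)
      · exact Or.inl (h2 ▸ hR a h1)
      · exact hch a h1 b h2 hab
    · intro a ha
      rcases Finset.mem_insert.1 ha with h1 | h1
      · exact Or.inl h1
      · exact Or.inr (hR a h1)
    · rw [Finset.card_insert_of_notMem (fun hh => hirr e (hR e hh))]
      exact congrArg (· + 1) hc.symm
  have hlt : ∀ e ∈ F, h e < L := by
    intro e he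
    obtain ⟨D, hD, hch, -, hc⟩ := key e he
    have := hL D hD hch
    omega
  have hmon : ∀ e ∈ F, ∀ f ∈ F, R e f → h e < h f := by
    intro e he f hf hef
    obtain ⟨D, hD, hch, hR, hc⟩ := key e he
    have : D.card ≤ h f := by
      apply Finset.le_sup (f := Finset.card)
      simp only [Ch, Finset.mem_filter, Finset.mem_powerset]
      refine ⟨hD, hch, fun a ha => ?_⟩
      rcases hR a ha with rfl | h1
      · exact hef
      · exact htr _ _ _ h1 hef
    omega
  rcases F.eq_empty_or_nonempty with rfl | ⟨e0, he0⟩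
  · exact ⟨∅, by simp, by simp, by simp⟩
  have hLpos : 0 < L := lt_of_le_of_lt (Nat.zero_le _) (hlt e0 he0)
  have hrn : (Finset.range L).Nonempty := ⟨0, by simpa using hLpos⟩
  obtain ⟨i, hi, hmax⟩ := Finset.exists_max_image (Finset.range L)
    (fun i => (F.filter (fun e => h e = i)).card) hrn
  refine ⟨F.filter (fun e => h e = i), Finset.filter_subset _ _, ?_, ?_⟩
  · have := Finset.card_le_mul_card_image_of_maps_to (s := F) (t := Finset.range L) (f := h)
      (fun e he => Finset.mem_range.2 (hlt e he)) _ hmax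
    rw [Finset.card_range, mul_comm] at this
    exact this
  · intro a ha b hb hab
    simp only [Finset.mem_filter] at ha hb
    have := hmon a ha.1 b hb.1 hab
    omega

lemma mirsky_multi {α ι : Type*} [DecidableEq α] [DecidableEq ι] (R : ι → α → α → Prop)
    (htr : ∀ i a b c, R i a b → R i b c → R i a c)
    (hirr : ∀ i a, ¬ R i a a) (F : Finset α) (L : ℕ)
    (hL : ∀ i, ∀ C ⊆ F, (∀ a ∈ C, ∀ b ∈ C, a ≠ b → R i a b ∨ R i b a) → C.card ≤ L)
    (I : Finset ι) :
    ∃ F' ⊆ F, F.card ≤ L ^ I.card * F'.card ∧ ∀ i ∈ I, ∀ a ∈ F', ∀ b ∈ F', ¬ R i a b := by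
  induction I using Finset.induction_on with
  | empty => exact ⟨F, subset_rfl, by simp, by simp⟩
  | insert i I hi ih =>
    obtain ⟨F1, h1, hc1, hR1⟩ := ih
    obtain ⟨F2, h2, hc2, hR2⟩ := mirsky (R i) (htr i) (hirr i) F1 L
      (fun C hC => hL i C (hC.trans h1))
    refine ⟨F2, h2.trans h1, ?_, ?_⟩
    · rw [Finset.card_insert_of_notMem hi, pow_succ, mul_assoc]
      exact hc1.trans (Nat.mul_le_mul_left _ hc2)
    · intro j hj a ha b hb
      rcases Finset.mem_insert.1 hj with rfl | hj
      · exact hR2 a ha b hb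
      · exact hR1 j hj a (h2 ha) b (h2 hb)

/-- first index of the block of `j` -/
noncomputable def st (S : Finset ℕ) (j : ℕ) : ℕ := sInf {x | blk S x = blk S j}

lemma blk_st (S : Finset ℕ) (j : ℕ) : blk S (st S j) = blk S j :=
  Nat.sInf_mem (s := {x | blk S x = blk S j}) ⟨j, rfl⟩

lemma st_le (S : Finset ℕ) {x j : ℕ} (h : blk S x = blk S j) : st S j ≤ x := Nat.sInf_le h

lemma st_congr (S : Finset ℕ) {x j : ℕ} (h : blk S x = blk S j) : st S x = st S j := by
  unfold st; rw [h]

def Hit (v : Finset ℕ → ℕ → ℕ) (S : Finset ℕ) (e f : Finset ℕ) (j : ℕ) : Prop :=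
  v f j ≤ v e (st S j) ∧ v e (st S j) < v f (j + 1)

/-- if no gap of `f` is hit by the block starts of `e`, blocks where `f` starts first are separated -/
lemma sep_aux (hG : Good r v M) {S : Finset ℕ} {e f : Finset ℕ} (he : e ∈ M)
    (hf : f ∈ M) (hne : e ≠ f) (h : ∀ j ∈ Finset.range (r - 1) \ S, ¬ Hit v S e f j)
    {x y : ℕ} (hx : x < r) (hy : y < r) (hb : blk S x = blk S y)
    (hst : v f (st S x) < v e (st S x)) : v f x < v e y := by
  have key : ∀ k, st S x + k ≤ x → v f (st S x + k) < v e (st S x) := by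
    intro k
    induction k with
    | zero => intro _; simpa using hst
    | succ k ih =>
      intro hk
      have ih := ih (by omega)
      set z := st S x + k with hz
      have hbz : blk S z = blk S x := by
        have h1 := blk_mono S (show st S x ≤ z by omega)
        have h2 := blk_mono S (show z ≤ x by omega)
        rw [blk_st] at h1
        omega
      have hzS : z ∉ S := by
        intro hzS
        have h1 := blk_succ_of_mem S hzS
        have h2 := blk_mono S (show z + 1 ≤ x by omega)
        omega
      have hh := h z (by simp only [Finset.mem_sdiff, Finset.mem_range]; exact ⟨by omega, hzS⟩)
      unfold Hit at hh
      rw [st_congr S hbz] at hh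
      have hd := hG.disj e he f hf hne (st S x) (by omega) (z + 1) (by omega)
      have : st S x + (k + 1) = z + 1 := by omega
      rw [this]
      by_contra h3
      exact hh ⟨by omega, by omega⟩
  have h1 := key (x - st S x) (by have := st_le S (rfl : blk S x = blk S x); omega)
  have h2 : st S x + (x - st S x) = x := by
    have := st_le S (rfl : blk S x = blk S x); omega
  rw [h2] at h1
  have h3 := hG.le he (st_le S hb.symm) hy
  omega

lemma hit_or_rel_aux (hG : Good r v M) {S : Finset ℕ} {e f : Finset ℕ} (he : e ∈ M)
    (hf : f ∈ M) (hne : e ≠ f) (h0 : v e 0 < v f 0)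
    (h : ∀ j ∈ Finset.range (r - 1) \ S, ¬ Hit v S e f j)
    (h' : ∀ j ∈ Finset.range (r - 1) \ S, ¬ Hit v S f e j) :
    ∃ T ∈ (Finset.range S.card).powerset, Rel r v S T e f := by
  classical
  have sep : ∀ x < r, ∀ y < r, ∀ w < r, blk S x = blk S y → blk S w = blk S x →
      (v e w < v f w → v e x < v f y) ∧ (¬ v e w < v f w → v f y < v e x) := by
    intro x hx y hy w hw hb hbw
    have hsx : st S x < r := lt_of_le_of_lt (st_le S rfl) hx
    rcases lt_or_gt_of_ne (hG.disj e he f hf hne (st S x) hsx (st S x) hsx) with h1 | h1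
    · have a := sep_aux hG hf he hne.symm h' hx hy hb h1
      have b := sep_aux hG hf he hne.symm h' hw hw rfl (by rw [st_congr S hbw]; exact h1)
      exact ⟨fun _ => a, fun h => absurd b h⟩
    · have a := sep_aux hG he hf hne h hy hx hb.symm (by rw [st_congr S hb.symm]; exact h1)
      have b := sep_aux hG he hf hne h hw hw rfl (by rw [st_congr S hbw]; exact h1)
      exact ⟨fun h => by omega, fun _ => a⟩
  refine ⟨(Finset.range S.card).filter (fun β => ∃ w < r, blk S w = β + 1 ∧ v e w < v f w),
    by simp, ?_⟩
  intro x hx y hy hb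
  have hsg : sgn S ((Finset.range S.card).filter
      (fun β => ∃ w < r, blk S w = β + 1 ∧ v e w < v f w)) x ↔ v e x < v f x := by
    unfold sgn
    simp only [Finset.mem_filter, Finset.mem_range]
    constructor
    · rintro (h1 | ⟨h1, w, hw, hbw, hlt⟩)
      · exact (sep x hx x hx 0 (by omega) rfl (by rw [blk_zero, h1])).1 h0
      · by_cases hz : blk S x = 0
        · exact (sep x hx x hx 0 (by omega) rfl (by rw [blk_zero, hz])).1 h0
        · exact (sep x hx x hx w hw rfl (by omega)).1 hlt
    · intro hlt
      by_cases hz : blk S x = 0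
      · exact Or.inl hz
      · have := blk_le S x
        exact Or.inr ⟨by omega, x, hx, by omega, hlt⟩
  rw [hsg]
  exact sep x hx y hy x hx hb rfl

lemma hit_or_rel (hr : 0 < r) (hG : Good r v M) {S : Finset ℕ} {e f : Finset ℕ} (he : e ∈ M)
    (hf : f ∈ M) (hne : e ≠ f)
    (h1 : ∀ T ∈ (Finset.range S.card).powerset, ¬ Rel r v S T e f)
    (h2 : ∀ T ∈ (Finset.range S.card).powerset, ¬ Rel r v S T f e) :
    ∃ j ∈ Finset.range (r - 1) \ S, Hit v S e f j ∨ Hit v S f e j := by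
  by_contra hc
  push Not at hc
  rcases lt_or_gt_of_ne (hG.disj e he f hf hne 0 hr 0 hr) with h0 | h0
  · obtain ⟨T, hT, hR⟩ := hit_or_rel_aux hG he hf hne h0 (fun j hj => (hc j hj).1)
      (fun j hj => (hc j hj).2)
    exact h1 T hT hR
  · obtain ⟨T, hT, hR⟩ := hit_or_rel_aux hG hf he hne.symm h0 (fun j hj => (hc j hj).2)
      (fun j hj => (hc j hj).1)
    exact h2 T hT hR

lemma hit_self (hG : Good r v M) {S : Finset ℕ} (hJ : (Finset.range (r - 1) \ S).Nonempty)
    {e : Finset ℕ} (he : e ∈ M) : ∃ j ∈ Finset.range (r - 1) \ S, Hit v S e e j := by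
  obtain ⟨j, hj, hmin⟩ := Finset.exists_min_image _ id hJ
  refine ⟨j, hj, ?_⟩
  simp only [Finset.mem_sdiff, Finset.mem_range, id] at hj hmin
  have hs : st S j = j := by
    by_contra hne
    have hlt : st S j < j := lt_of_le_of_ne (st_le S rfl) hne
    have hnm : st S j ∉ S := by
      intro hm
      have h1 := blk_succ_of_mem S hm
      have h2 := blk_mono S (show st S j + 1 ≤ j by omega)
      rw [blk_st] at h1
      omega
    have := hmin (st S j) ⟨by omega, hnm⟩
    omega
  unfold Hit
  rw [hs]
  exact ⟨le_rfl, hG.mono e he j (j + 1) (by omega) (by omega)⟩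

lemma step (hr : 0 < r) (hG : Good r v M) {S : Finset ℕ} {F : Finset (Finset ℕ)} (hFM : F ⊆ M)
    (hJ : (Finset.range (r - 1) \ S).Nonempty)
    (hF : ∀ T ∈ (Finset.range S.card).powerset, ∀ e ∈ F, ∀ f ∈ F, ¬ Rel r v S T e f) :
    ∃ j ∈ Finset.range (r - 1) \ S, ∃ F' ⊆ F,
      F.card ≤ 2 * (Finset.range (r - 1) \ S).card * F'.card ∧
      ∀ e ∈ F', ∀ f ∈ F', v e j < v f (j + 1) := by
  classical
  set J := Finset.range (r - 1) \ S with hJdef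
  by_contra hc
  push Not at hc
  have hA : ∀ e ∈ F, ∀ j ∈ J, 2 * J.card * (F.filter (fun f => Hit v S e f j)).card < F.card := by
    intro e he j hj
    by_contra hlt
    obtain ⟨a, ha, b, hb, hab⟩ := hc j hj (F.filter (fun f => Hit v S e f j))
      (Finset.filter_subset _ _) (by omega)
    have ha' : Hit v S e a j := (Finset.mem_filter.1 ha).2
    have hb' : Hit v S e b j := (Finset.mem_filter.1 hb).2
    have h1 := ha'.1
    have h2 := hb'.2
    omega
  have hFne : F.Nonempty := by
    by_contra hem
    rw [Finset.not_nonempty_iff_eq_empty] at hem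
    obtain ⟨j, hj⟩ := hJ
    obtain ⟨a, ha, _⟩ := hc j hj ∅ (by simp) (by simp [hem])
    simp at ha
  let G : Finset (Finset ℕ × Finset ℕ) :=
    (F ×ˢ F).filter (fun p => ∃ j ∈ J, Hit v S p.1 p.2 j)
  have hcov : F ×ˢ F ⊆ G ∪ G.image Prod.swap := by
    rintro ⟨e, f⟩ hp
    rw [Finset.mem_product] at hp
    obtain ⟨he, hf⟩ := hp
    simp only at he hf
    by_cases hef : e = f
    · subst hef
      obtain ⟨j, hj, hh⟩ := hit_self hG hJ (hFM he)
      apply Finset.mem_union_left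
      simp only [G, Finset.mem_filter, Finset.mem_product]
      exact ⟨⟨he, he⟩, j, hj, hh⟩
    · obtain ⟨j, hj, hh⟩ := hit_or_rel hr hG (hFM he) (hFM hf) hef
        (fun T hT => hF T hT e he f hf) (fun T hT => hF T hT f hf e he)
      rcases hh with hh | hh
      · apply Finset.mem_union_left
        simp only [G, Finset.mem_filter, Finset.mem_product]
        exact ⟨⟨he, hf⟩, j, hj, hh⟩
      · apply Finset.mem_union_right
        rw [Finset.mem_image]
        refine ⟨(f, e), ?_, rfl⟩
        simp only [G, Finset.mem_filter, Finset.mem_product]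
        exact ⟨⟨hf, he⟩, j, hj, hh⟩
  have hcard : F.card * F.card ≤ 2 * G.card := by
    rw [← Finset.card_product]
    calc _ ≤ _ := Finset.card_le_card hcov
      _ ≤ _ := Finset.card_union_le _ _
      _ ≤ G.card + G.card := Nat.add_le_add_left Finset.card_image_le _
      _ = _ := by ring
  have hGcard : G.card ≤ ∑ e ∈ F, ∑ j ∈ J, (F.filter (fun f => Hit v S e f j)).card := by
    have hsub : G ⊆ F.biUnion (fun e => J.biUnion (fun j =>
        (F.filter (fun f => Hit v S e f j)).image (fun f => (e, f)))) := by
      rintro ⟨e, f⟩ hp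
      simp only [G, Finset.mem_filter, Finset.mem_product] at hp
      obtain ⟨⟨he, hf⟩, j, hj, hh⟩ := hp
      simp only [Finset.mem_biUnion, Finset.mem_image, Finset.mem_filter]
      exact ⟨e, he, j, hj, f, ⟨hf, hh⟩, rfl⟩
    refine (Finset.card_le_card hsub).trans (Finset.card_biUnion_le.trans ?_)
    refine Finset.sum_le_sum fun e he => Finset.card_biUnion_le.trans ?_
    exact Finset.sum_le_sum fun j hj => Finset.card_image_le
  have hJpos : 0 < J.card := Finset.card_pos.2 hJ
  have hlt : 2 * J.card * (∑ e ∈ F, ∑ j ∈ J, (F.filter (fun f => Hit v S e f j)).card)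
      < F.card * (J.card * F.card) := by
    rw [Finset.mul_sum, ← smul_eq_mul (a := F.card), ← Finset.sum_const]
    refine Finset.sum_lt_sum_of_nonempty hFne fun e he => ?_
    rw [Finset.mul_sum, ← smul_eq_mul (a := J.card), ← Finset.sum_const]
    exact Finset.sum_lt_sum_of_nonempty hJ fun j hj => hA e he j hj
  have : J.card * (F.card * F.card) ≤ J.card * (2 * G.card) := Nat.mul_le_mul_left _ hcard
  have h3 : 2 * J.card * G.card ≤ _ := Nat.mul_le_mul_left (2 * J.card) hGcard
  nlinarith

lemma main_bound (hr : 0 < r) (hG : Good r v M) (L : ℕ)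
    (hL : ∀ C ⊆ M, (∃ P, IsPattern r P ∧ IsPClique P C) → C.card ≤ L) :
    ∀ m : ℕ, ∀ S ⊆ Finset.range (r - 1), (Finset.range (r - 1) \ S).card = m →
      ∀ F ⊆ M, Cuts v S F →
        F.card ≤ L ^ (2 ^ r - 2 ^ S.card) * (2 ^ m * m.factorial) := by
  intro m
  induction m with
  | zero =>
    intro S hSr hm F hFM hcut
    have hScard : S.card = r - 1 := by
      have := Finset.card_sdiff_add_card_eq_card hSr
      rw [hm, Finset.card_range] at this
      omega
    obtain ⟨F', hF', hc, hR⟩ := mirsky_multi (fun T => Rel r v S T)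
      (fun T a b c h1 h2 => h1.trans h2) (fun T a => Rel.irrefl hr a) F L
      (fun T C hC hch => hL C (hC.trans hFM) (chain_clique hr hG (hC.trans hFM)
        (fun s hs e he f hf => hcut s hs e (hC he) f (hC hf)) hch))
      (Finset.range S.card).powerset
    rw [Finset.card_powerset, Finset.card_range] at hc
    have h1 : F'.card ≤ 1 := by
      rw [Finset.card_le_one]
      intro e he f hf
      by_contra hne
      obtain ⟨j, hj, _⟩ := hit_or_rel hr hG (hFM (hF' he)) (hFM (hF' hf)) hne
        (fun T hT => hR T hT e he f hf) (fun T hT => hR T hT f hf e he)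
      rw [Finset.card_eq_zero] at hm
      rw [hm] at hj
      simp at hj
    have h2 : 2 ^ r - 2 ^ S.card = 2 ^ S.card := by
      obtain ⟨q, rfl⟩ : ∃ q, r = q + 1 := ⟨r - 1, by omega⟩
      rw [hScard, Nat.add_sub_cancel, pow_succ]
      omega
    rw [h2]
    calc F.card ≤ _ := hc
      _ ≤ L ^ 2 ^ S.card * 1 := Nat.mul_le_mul_left _ h1
      _ = _ := by simp
  | succ m ih =>
    intro S hSr hm F hFM hcut
    have hScard : S.card + (m + 1) = r - 1 := by
      have := Finset.card_sdiff_add_card_eq_card hSr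
      rw [hm, Finset.card_range] at this
      omega
    obtain ⟨F', hF', hc, hR⟩ := mirsky_multi (fun T => Rel r v S T)
      (fun T a b c h1 h2 => h1.trans h2) (fun T a => Rel.irrefl hr a) F L
      (fun T C hC hch => hL C (hC.trans hFM) (chain_clique hr hG (hC.trans hFM)
        (fun s hs e he f hf => hcut s hs e (hC he) f (hC hf)) hch))
      (Finset.range S.card).powerset
    rw [Finset.card_powerset, Finset.card_range] at hc
    obtain ⟨j, hj, F2, hF2, hc2, hcutj⟩ := step hr hG (hF'.trans hFM)
      (Finset.card_pos.1 (by omega)) hR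
    rw [hm] at hc2
    have hjS : j ∉ S := (Finset.mem_sdiff.1 hj).2
    have hins : insert j S ⊆ Finset.range (r - 1) :=
      Finset.insert_subset (Finset.mem_sdiff.1 hj).1 hSr
    have hci : (insert j S).card = S.card + 1 := Finset.card_insert_of_notMem hjS
    have h3 := ih (insert j S) hins (by
        have := Finset.card_sdiff_add_card_eq_card hins
        rw [Finset.card_range] at this
        omega) F2 (hF2.trans (hF'.trans hFM)) (by
        intro s hs e he f hf
        rcases Finset.mem_insert.1 hs with rfl | hs
        · exact hcutj e he f hf
        · exact hcut s hs e (hF' (hF2 he)) f (hF' (hF2 hf)))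
    rw [hci] at h3
    have hexp : 2 ^ r - 2 ^ S.card = 2 ^ S.card + (2 ^ r - 2 ^ (S.card + 1)) := by
      have : 2 ^ (S.card + 1) ≤ 2 ^ r := Nat.pow_le_pow_right (by norm_num) (by omega)
      rw [pow_succ] at this ⊢
      omega
    rw [hexp, pow_add]
    calc F.card ≤ _ := hc
      _ ≤ L ^ 2 ^ S.card * (2 * (m + 1) * F2.card) := Nat.mul_le_mul_left _ hc2
      _ ≤ L ^ 2 ^ S.card * (2 * (m + 1) *
          (L ^ (2 ^ r - 2 ^ (S.card + 1)) * (2 ^ m * m.factorial))) := by gcongr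
      _ = _ := by rw [Nat.factorial_succ, pow_succ]; ring

end comb

lemma fact_bound (m : ℕ) : 2 ^ m * m.factorial ≤ 2 ^ (2 ^ (m + 1) - 1) := by
  induction m with
  | zero => simp
  | succ m ih =>
    have h1 : 2 ^ (m + 1 + 1) - 1 = (2 ^ (m + 1) - 1) + 2 ^ (m + 1) := by
      have : 1 ≤ 2 ^ (m + 1) := Nat.one_le_two_pow
      rw [pow_succ 2 (m + 1)]
      omega
    rw [h1, pow_add 2 (2 ^ (m + 1) - 1), Nat.factorial_succ, pow_succ 2 m]
    have h2 : 2 * (m + 1) ≤ 2 ^ 2 ^ (m + 1) := by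
      have a : m + 1 < 2 ^ (m + 1) := Nat.lt_two_pow_self
      have b : 2 ^ (m + 2) ≤ 2 ^ 2 ^ (m + 1) := Nat.pow_le_pow_right (by norm_num) (by omega)
      rw [pow_succ] at b
      omega
    have h3 : 2 ^ m * 2 * ((m + 1) * m.factorial) = (2 ^ m * m.factorial) * (2 * (m + 1)) := by
      ring
    rw [← pow_succ 2 m] at h3 ⊢
    rw [h3]
    exact Nat.mul_le_mul ih h2

lemma good_of_matching {r : ℕ} {M : Finset (Finset ℕ)} (h : IsMatching r M) :
    ∃ v, Good r v M := by
  classical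
  have hv : ∀ e : Finset ℕ, ∃ w : ℕ → ℕ, e ∈ M → (∀ x y, x < y → y < r → w x < w y) ∧
      e = (Finset.range r).image w := by
    intro e
    by_cases he : e ∈ M
    · have hc := h.1 e he
      refine ⟨fun x => if hx : x < r then e.orderEmbOfFin hc ⟨x, hx⟩ else 0, fun _ => ⟨?_, ?_⟩⟩
      · intro x y hxy hy
        have hx : x < r := by omega
        simp only [hx, hy, dif_pos]
        exact (e.orderEmbOfFin hc).strictMono hxy
      · ext z
        rw [Finset.mem_image]
        constructor
        · intro hz
          have : z ∈ Set.range (e.orderEmbOfFin hc) := by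
            rw [Finset.range_orderEmbOfFin]; exact hz
          obtain ⟨⟨x, hx⟩, rfl⟩ := this
          exact ⟨x, by simpa using hx, by simp [hx]⟩
        · rintro ⟨x, hx, rfl⟩
          rw [Finset.mem_range] at hx
          simp only [hx, dif_pos]
          exact Finset.orderEmbOfFin_mem e hc _
    · exact ⟨id, fun hh => absurd hh he⟩
  choose v hv using hv
  refine ⟨v, fun e he => (hv e he).1, ?_, fun e he => (hv e he).2⟩
  intro e he f hf hne x hx y hy hxy
  have hd := h.2 e he f hf hne
  have h1 : v e x ∈ e := by
    have := Finset.mem_image_of_mem (v e) (Finset.mem_range.2 hx)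
    rwa [← (hv e he).2] at this
  have h2 : v f y ∈ f := by
    have := Finset.mem_image_of_mem (v f) (Finset.mem_range.2 hy)
    rwa [← (hv f hf).2] at this
  rw [← hxy] at h2
  exact (Finset.disjoint_left.1 hd) h1 h2

lemma exists_matching (r n : ℕ) (hr : 0 < r) : ∃ M, IsOrderedMatching r n M := by
  have hdis : ∀ i j : ℕ, i < j → Disjoint (Finset.Ioc (r * i) (r * (i + 1)))
      (Finset.Ioc (r * j) (r * (j + 1))) := by
    intro i j hij
    rw [Finset.disjoint_left]
    intro z hz hz'
    rw [Finset.mem_Ioc] at hz hz'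
    have : r * (i + 1) ≤ r * j := Nat.mul_le_mul_left _ hij
    omega
  have hcard : ∀ i : ℕ, (Finset.Ioc (r * i) (r * (i + 1))).card = r := by
    intro i
    rw [Nat.card_Ioc, mul_add]
    omega
  have hdis' : ∀ i j : ℕ, i ≠ j → Disjoint (Finset.Ioc (r * i) (r * (i + 1)))
      (Finset.Ioc (r * j) (r * (j + 1))) := by
    intro i j hij
    rcases lt_or_gt_of_ne hij with h | h
    · exact hdis i j h
    · exact (hdis j i h).symm
  refine ⟨(Finset.range n).image (fun i => Finset.Ioc (r * i) (r * (i + 1))), ⟨?_, ?_⟩, ?_, ?_⟩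
  · intro e he
    obtain ⟨i, -, rfl⟩ := Finset.mem_image.1 he
    exact hcard i
  · intro e he f hf hne
    obtain ⟨i, -, rfl⟩ := Finset.mem_image.1 he
    obtain ⟨j, -, rfl⟩ := Finset.mem_image.1 hf
    apply hdis'
    rintro rfl
    exact hne rfl
  · rw [Finset.card_image_of_injective, Finset.card_range]
    intro i j hij
    by_contra hne
    have h1 := hdis' i j hne
    simp only at hij
    rw [← hij, disjoint_self] at h1
    have h2 := hcard i
    rw [h1] at h2
    simp at h2
    omega
  · ext z
    simp only [mSupport, Finset.mem_sup, Finset.mem_image, Finset.mem_range, id, Finset.mem_Icc]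
    constructor
    · rintro ⟨e, ⟨i, hi, rfl⟩, hz⟩
      rw [Finset.mem_Ioc] at hz
      have : r * (i + 1) ≤ r * n := Nat.mul_le_mul_left _ hi
      omega
    · rintro ⟨h1, h2⟩
      have hlt : (z - 1) / r < n := by
        rw [Nat.div_lt_iff_lt_mul hr, mul_comm]
        omega
      refine ⟨_, ⟨(z - 1) / r, hlt, rfl⟩, ?_⟩
      rw [Finset.mem_Ioc, mul_add]
      have a := Nat.div_add_mod (z - 1) r
      have b := Nat.mod_lt (z - 1) hr
      omega

lemma card_le (r n : ℕ) (hr : 0 < r) {M : Finset (Finset ℕ)} (h : IsOrderedMatching r n M) :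
    n ≤ (2 * cliqueMax r M) ^ (2 ^ r - 1) := by
  obtain ⟨v, hG⟩ := good_of_matching h.1
  have := main_bound hr hG (cliqueMax r M) (by
    rintro C hC ⟨P, hP, hcl⟩
    apply le_csSup
    · refine ⟨M.card, ?_⟩
      rintro k ⟨_, _, M', hM', _, rfl⟩
      exact Finset.card_le_card hM'
    · exact ⟨P, hP, C, hC, hcl, rfl⟩) (r - 1) ∅ (by simp) (by simp) M subset_rfl
      (by intro s hs; simp at hs)
  have hf := fact_bound (r - 1)
  rw [Nat.sub_add_cancel hr] at hf
  rw [h.2.1] at this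
  rw [mul_pow]
  simp only [Finset.card_empty, pow_zero] at this
  calc n ≤ _ := this
    _ ≤ _ := Nat.mul_le_mul_left _ hf
    _ = _ := mul_comm _ _

end ESM

/-- Theorem 3.4, Sauermann–Zakharov. For all `r ≥ 2` and
`n ≥ 1`, `L_r(n) ≥ (1/2)·n^{1/(2^r-1)}`. -/
theorem erdos_szekeres_matchings (r n : ℕ) (hr : 2 ≤ r) (hn : 1 ≤ n) :
    (1 / 2 : ℝ) * (n : ℝ) ^ ((1 : ℝ) / ((2 : ℝ) ^ r - 1)) ≤ (minClique r n : ℝ) := by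
  obtain ⟨M, hM, hMeq⟩ : ∃ M, IsOrderedMatching r n M ∧ cliqueMax r M = minClique r n := by
    apply Nat.sInf_mem (s := {l | ∃ M, IsOrderedMatching r n M ∧ cliqueMax r M = l})
    obtain ⟨M, hM⟩ := ESM.exists_matching r n (by omega)
    exact ⟨_, M, hM, rfl⟩
  have hle := ESM.card_le r n (by omega) hM
  rw [hMeq] at hle
  have hpos : 1 < 2 ^ r := Nat.one_lt_two_pow (by omega)
  have hcast : ((2 ^ r - 1 : ℕ) : ℝ) = (2 : ℝ) ^ r - 1 := by
    rw [Nat.cast_sub hpos.le]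
    simp
  have h2 : (n : ℝ) ≤ (2 * (minClique r n : ℝ)) ^ (2 ^ r - 1 : ℕ) := by exact_mod_cast hle
  have h3 : (n : ℝ) ^ ((1 : ℝ) / ((2 : ℝ) ^ r - 1)) ≤ 2 * (minClique r n : ℝ) := by
    rw [← hcast, one_div]
    calc (n : ℝ) ^ (((2 ^ r - 1 : ℕ) : ℝ)⁻¹)
        ≤ ((2 * (minClique r n : ℝ)) ^ (2 ^ r - 1 : ℕ)) ^ (((2 ^ r - 1 : ℕ) : ℝ)⁻¹) :=
          Real.rpow_le_rpow (by positivity) h2 (by positivity)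
      _ = _ := Real.pow_rpow_inv_natCast (by positivity) (by omega)
  linarith
end
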